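/- Let A ∈ {0,1}^{n×n} be a random symmetric adjacency matrix with zero diagonal such that A_{uv} ~ Bernoulli(P_{uv}) independently for all u > v, where P ∈ [0,1]^{n×n} is symmetric, and set p_max = max over u ≥ v of P_{uv}. Fix τ > 0 and let J = {u ∈ [n] : d_u ≤ τ}, where d_u = Σ_v A_{uv}. For any C' > 0 there exists C > 0 such that, with probability at least 1 − n^{−C'}, ‖A_{JJ} − P_{JJ}‖ ≤ C·(√(n·p_max) + √τ + n·p_max/(√τ + √(n·p_max))), where for a matrix M, M_{JJ} denotes the n×n matrix that agrees with M on entries indexed by J×J and is zero elsewhere. -/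

import Mathlib

open scoped BigOperators
open Filter

namespace SBM

noncomputable section

/-- Adjacency matrices of graphs on `n` nodes. -/
abbrev Adj (n : ℕ) := Fin n → Fin n → Bool

/-- 0/1 real value of an entry of the adjacency matrix. -/
def aVal {n : ℕ} (A : Adj n) (u v : Fin n) : ℝ := if A u v then 1 else 0

/-- Probability weight of one adjacency matrix under the SBM with edge
probability matrix `P`: the entries above the diagonal are independent
Bernoulli, the matrix is symmetric with zero diagonal. -/
def weight {n : ℕ} (P : Matrix (Fin n) (Fin n) ℝ) (A : Adj n) : ℝ :=
  if (∀ u, A u u = false) ∧ (∀ u v, A u v = A v u) then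
    ∏ u : Fin n, ∏ v : Fin n,
      if u < v then (if A u v then P u v else 1 - P u v) else 1
  else 0

/-- Probability of a set of adjacency matrices under the SBM with edge
probability matrix `P`. -/
def prob {n : ℕ} (P : Matrix (Fin n) (Fin n) ℝ) (S : Set (Adj n)) : ℝ :=
  ∑ A : Adj n, S.indicator (weight P) A

/-- The edge probability matrix `P u v = B (σ u) (σ v)`. -/
def pMat {n k : ℕ} (B : Matrix (Fin k) (Fin k) ℝ) (σ : Fin n → Fin k) :
    Matrix (Fin n) (Fin n) ℝ := fun u v => B (σ u) (σ v)

/-- Size of the `i`-th community of a label assignment. -/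
def comSize {n k : ℕ} (σ : Fin n → Fin k) (i : Fin k) : ℝ :=
  ((Finset.univ.filter fun u => σ u = i).card : ℝ)

/-- Hamming loss `ℓ0`. -/
def l0 {n k : ℕ} (σ1 σ2 : Fin n → Fin k) : ℝ :=
  ((Finset.univ.filter fun u => σ1 u ≠ σ2 u).card : ℝ) / n

/-- Misclassification proportion: minimum of `ℓ0` over relabelings. -/
def misclass {n k : ℕ} (σh σ : Fin n → Fin k) : ℝ :=
  ⨅ π : Equiv.Perm (Fin k), l0 σh (fun u => π (σ u))

/-- Euclidean norm of a vector. -/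
def sqnorm {n : ℕ} (x : Fin n → ℝ) : ℝ := Real.sqrt (∑ i, x i ^ 2)

/-- Operator (spectral) norm of a square matrix. -/
def opNorm {n : ℕ} (M : Matrix (Fin n) (Fin n) ℝ) : ℝ :=
  sSup { t : ℝ | ∃ x : Fin n → ℝ, sqnorm x = 1 ∧ t = sqnorm (M.mulVec x) }

/-- The `k`-th largest singular value of a square matrix, via the
Courant–Fischer max-min characterization. -/
def kthSingular {n : ℕ} (M : Matrix (Fin n) (Fin n) ℝ) (k : ℕ) : ℝ :=
  sSup { t : ℝ | 0 ≤ t ∧ ∃ V : Submodule ℝ (Fin n → ℝ),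
    Module.finrank ℝ V = k ∧ ∀ x ∈ V, t * sqnorm x ≤ sqnorm (M.mulVec x) }

/-- The Rényi divergence of order 1/2, `I*`. -/
def renyiHalf (n : ℕ) (a b : ℝ) : ℝ :=
  -2 * Real.log (Real.sqrt ((a / n) * (b / n)) +
    Real.sqrt ((1 - a / n) * (1 - b / n)))

/-- The balanced parameter space `Θ₀(n,k,a,b,β)`. -/
def Theta0 (n k : ℕ) (a b β : ℝ) :
    Set (Matrix (Fin k) (Fin k) ℝ × (Fin n → Fin k)) :=
  { p | (∀ i, (n : ℝ) / (β * k) - 1 ≤ comSize p.2 i ∧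
          comSize p.2 i ≤ β * n / k + 1) ∧
        (∀ i, p.1 i i = a / n) ∧ ∀ i j, i ≠ j → p.1 i j = b / n }

/-- Average of the off-diagonal entries of a `k × k` matrix. -/
def offDiagAvg {k : ℕ} (B : Matrix (Fin k) (Fin k) ℝ) : ℝ :=
  (1 / ((k : ℝ) * ((k : ℝ) - 1))) *
    ∑ i : Fin k, ∑ j : Fin k, if i ≠ j then B i j else 0

/-- The general parameter space `Θ(n,k,a,b,λ,β;α)`. -/
def ThetaGen (n k : ℕ) (a b lam β α : ℝ) :
    Set (Matrix (Fin k) (Fin k) ℝ × (Fin n → Fin k)) :=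
  { p | (∀ i, (n : ℝ) / (β * k) - 1 ≤ comSize p.2 i ∧
          comSize p.2 i ≤ β * n / k + 1) ∧
        (∀ i j, p.1 i j = p.1 j i) ∧
        (∀ i j, 0 ≤ p.1 i j ∧ p.1 i j ≤ 1) ∧
        b / (α * n) ≤ offDiagAvg p.1 ∧
        (∀ i j, i ≠ j → p.1 i j ≤ b / n) ∧
        (∃ i j, i ≠ j ∧ p.1 i j = b / n) ∧
        (∀ i, a / n ≤ p.1 i i) ∧ (∃ i, p.1 i i = a / n) ∧
        (∀ i, p.1 i i ≤ α * a / n) ∧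
        lam ≤ kthSingular (pMat p.1 p.2) k }

/-- The estimated community `C̃ᵢᵘ` (node `u` itself is excluded). -/
def cluster {n k : ℕ} (u : Fin n) (s : Fin n → Fin k) (i : Fin k) :
    Finset (Fin n) :=
  Finset.univ.filter fun v => v ≠ u ∧ s v = i

/-- Number of edges within a set of nodes. -/
def edgesWithin {n : ℕ} (A : Adj n) (C : Finset (Fin n)) : ℝ :=
  (∑ v ∈ C, ∑ w ∈ C, aVal A v w) / 2

/-- Number of edges between two disjoint sets of nodes. -/
def edgesBetween {n : ℕ} (A : Adj n) (C D : Finset (Fin n)) : ℝ :=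
  ∑ v ∈ C, ∑ w ∈ D, aVal A v w

/-- The connectivity estimates `B̂ᵢⱼᵘ` of Algorithm 1, based on the initial
assignment `s = σ⁰ᵤ`. -/
def hatB {n k : ℕ} (A : Adj n) (u : Fin n) (s : Fin n → Fin k) (i j : Fin k) :
    ℝ :=
  if i = j then
    edgesWithin A (cluster u s i) /
      (((cluster u s i).card : ℝ) * (((cluster u s i).card : ℝ) - 1) / 2)
  else
    edgesBetween A (cluster u s i) (cluster u s j) /
      (((cluster u s i).card : ℝ) * ((cluster u s j).card : ℝ))

/-- `â_u = n · minᵢ B̂ᵢᵢᵘ`. -/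
def hata {n k : ℕ} (A : Adj n) (u : Fin n) (s : Fin n → Fin k) : ℝ :=
  n * ⨅ i : Fin k, hatB A u s i i

/-- `b̂_u = n · maxᵢ≠ⱼ B̂ᵢⱼᵘ`. -/
def hatb {n k : ℕ} (A : Adj n) (u : Fin n) (s : Fin n → Fin k) : ℝ :=
  n * sSup { x : ℝ | ∃ i j : Fin k, i ≠ j ∧ x = hatB A u s i j }

/-- `t = ½ log (â (1 − b̂/n) / (b̂ (1 − â/n)))`. -/
def tStat (n : ℕ) (ha hb : ℝ) : ℝ :=
  Real.log (ha * (1 - hb / n) / (hb * (1 - ha / n))) / 2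

/-- `ρ = −(1/(2t)) log (((â/n)e^{−t} + 1 − â/n)/((b̂/n)e^{t} + 1 − b̂/n))`. -/
def rhoStat (n : ℕ) (ha hb t : ℝ) : ℝ :=
  -(Real.log (((ha / n) * Real.exp (-t) + 1 - ha / n) /
      ((hb / n) * Real.exp t + 1 - hb / n))) / (2 * t)

/-- Penalized vote of node `u` for label `l`. -/
def vote {n k : ℕ} (A : Adj n) (u : Fin n) (s : Fin n → Fin k) (ρ : ℝ)
    (l : Fin k) : ℝ :=
  (∑ v ∈ cluster u s l, aVal A u v) - ρ * ((cluster u s l).card : ℝ)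

/-- `lbl` maximizes the penalized vote of node `u`. -/
def VoteMax {n k : ℕ} (A : Adj n) (u : Fin n) (s : Fin n → Fin k) (ρ : ℝ)
    (lbl : Fin k) : Prop :=
  ∀ l : Fin k, vote A u s ρ l ≤ vote A u s ρ lbl

/-- `|{v : σU_{u1}(v) = l} ∩ {v : σU_u(v) = σU_u(u)}|`. -/
def consensusCount {n k : ℕ} (σU : Fin n → Fin n → Fin k) (u1 u : Fin n)
    (l : Fin k) : ℕ :=
  (Finset.univ.filter fun v => σU u1 v = l ∧ σU u v = σU u u).card

/-- Specification of the refinement-plus-consensus scheme of Algorithm 1, with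
an arbitrary family of penalties `ρ`.  `σ0 u` is the initial assignment
`σ⁰ᵤ`, `σU u` is the refined assignment `σ̂ᵤ`, `σhat` is the final output. -/
def RefineSpec {n k : ℕ} (A : Adj n) (σ0 σU : Fin n → Fin n → Fin k)
    (ρ : Fin n → ℝ) (σhat : Fin n → Fin k) : Prop :=
  (∀ u v, v ≠ u → σU u v = σ0 u v) ∧
  (∀ u, VoteMax A u (σ0 u) (ρ u) (σU u u)) ∧
  ∀ hn : 0 < n,
    σhat ⟨0, hn⟩ = σU ⟨0, hn⟩ ⟨0, hn⟩ ∧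
    ∀ u, u ≠ ⟨0, hn⟩ →
      ∀ l : Fin k, consensusCount σU ⟨0, hn⟩ u l ≤
        consensusCount σU ⟨0, hn⟩ u (σhat u)

/-- Algorithm 1 with the standard data-driven penalties. -/
def AlgorithmOne {n k : ℕ} (A : Adj n) (σ0 σU : Fin n → Fin n → Fin k)
    (σhat : Fin n → Fin k) : Prop :=
  RefineSpec A σ0 σU
    (fun u => rhoStat n (hata A u (σ0 u)) (hatb A u (σ0 u))
      (tStat n (hata A u (σ0 u)) (hatb A u (σ0 u)))) σhat

/-- Algorithm 1 with the truncated `t_u` (truncation level `log (2/ε0)`). -/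
def AlgorithmOneTrunc (ε0 : ℝ) {n k : ℕ} (A : Adj n)
    (σ0 σU : Fin n → Fin n → Fin k) (σhat : Fin n → Fin k) : Prop :=
  RefineSpec A σ0 σU
    (fun u => rhoStat n (hata A u (σ0 u)) (hatb A u (σ0 u))
      (min (tStat n (hata A u (σ0 u)) (hatb A u (σ0 u)))
        (Real.log (2 / ε0)))) σhat

/-- Algorithm 1 with known `a` and `b`. -/
def AlgorithmOneKnown (a b : ℝ) {n k : ℕ} (A : Adj n)
    (σ0 σU : Fin n → Fin n → Fin k) (σhat : Fin n → Fin k) : Prop :=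
  RefineSpec A σ0 σU (fun _ => rhoStat n a b (tStat n a b)) σhat

/-- Algorithm 1 with known `a`, `b` and truncated `t_u`. -/
def AlgorithmOneKnownTrunc (a b ε0 : ℝ) {n k : ℕ} (A : Adj n)
    (σ0 σU : Fin n → Fin n → Fin k) (σhat : Fin n → Fin k) : Prop :=
  RefineSpec A σ0 σU
    (fun _ => rhoStat n a b (min (tStat n a b) (Real.log (2 / ε0)))) σhat

/-- The initializer `σ0 A u` (that is, `σ⁰ᵤ`) only uses the data `A₋ᵤ`. -/
def LocalInit {n k : ℕ} (σ0 : Adj n → Fin n → Fin n → Fin k) : Prop :=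
  ∀ (A A' : Adj n) (u : Fin n),
    (∀ v w, v ≠ u → w ≠ u → A v w = A' v w) → σ0 A u = σ0 A' u

/-- Condition 1: the initializer is, with probability at least
`1 − C0 n^{−(1+δ)}`, within misclassification proportion `γ` of the truth,
uniformly over the parameter space and the left-out node. -/
def Condition1 {n k : ℕ}
    (Θ : Set (Matrix (Fin k) (Fin k) ℝ × (Fin n → Fin k)))
    (σ0 : Adj n → Fin n → Fin n → Fin k) (C0 δ γ : ℝ) : Prop :=
  ∀ p ∈ Θ, ∀ u : Fin n,
    1 - C0 * (n : ℝ) ^ (-(1 + δ)) ≤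
      prob (pMat p.1 p.2) { A | misclass p.2 (σ0 A u) ≤ γ }

/-- Degree of a node. -/
def degree {n : ℕ} (A : Adj n) (u : Fin n) : ℝ := ∑ v, aVal A u v

/-- Average degree `d̄`. -/
def avgDeg {n : ℕ} (A : Adj n) : ℝ := (∑ u, degree A u) / n

/-- Trimming operator `T_τ`: zero out rows/columns of high-degree nodes. -/
def trim {n : ℕ} (A : Adj n) (τ : ℝ) : Matrix (Fin n) (Fin n) ℝ :=
  fun u v => if τ ≤ degree A u ∨ τ ≤ degree A v then 0 else aVal A u v

/-- Regularized adjacency matrix `A_τ = A + (τ/n)·11ᵀ`. -/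
def addReg {n : ℕ} (A : Adj n) (τ : ℝ) : Matrix (Fin n) (Fin n) ℝ :=
  fun u v => aVal A u v + τ / n

/-- Normalized Laplacian `L(M)_{uv} = M_{uv}/√(r_u r_v)`. -/
def lap {n : ℕ} (M : Matrix (Fin n) (Fin n) ℝ) : Matrix (Fin n) (Fin n) ℝ :=
  fun u v => M u v / Real.sqrt ((∑ w, M u w) * (∑ w, M v w))

/-- `U` is a matrix whose columns are orthonormal eigenvectors of `M`
corresponding to the `k` leading (largest in absolute value) eigenvalues. -/
def LeadingEigenvectors {n k : ℕ} (M : Matrix (Fin n) (Fin n) ℝ)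
    (U : Matrix (Fin n) (Fin k) ℝ) : Prop :=
  ∃ μ : Fin k → ℝ,
    (∀ i j : Fin k, (∑ u, U u i * U u j) = if i = j then (1 : ℝ) else 0) ∧
    (∀ j : Fin k, M.mulVec (fun u => U u j) = fun u => μ j * U u j) ∧
    ∀ (x : Fin n → ℝ) (c : ℝ), M.mulVec x = (fun u => c * x u) →
      (∀ j, (∑ u, x u * U u j) = 0) → x ≠ 0 → ∀ j, |c| ≤ |μ j|

/-- Distance between two rows of `U`. -/
def rowDist {n k : ℕ} (U : Matrix (Fin n) (Fin k) ℝ) (v w : Fin n) : ℝ :=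
  Real.sqrt (∑ j, (U v j - U w j) ^ 2)

/-- Number of points of `S` within distance `r` of `v`. -/
def ballCount {n k : ℕ} (U : Matrix (Fin n) (Fin k) ℝ) (r : ℝ)
    (S : Finset (Fin n)) (v : Fin n) : ℕ :=
  (S.filter fun w => rowDist U w v < r).card

/-- Specification of the greedy clustering scheme (Algorithm 2) with critical
radius `r`, applied to the rows of `U`. -/
def GreedyCluster {n k : ℕ} (U : Matrix (Fin n) (Fin k) ℝ) (r : ℝ)
    (σhat : Fin n → Fin k) : Prop :=
  ∃ (S : ℕ → Finset (Fin n)) (t : Fin k → Fin n) (Ch : Fin k → Finset (Fin n)),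
    S 0 = Finset.univ ∧
    (∀ i : Fin k,
      ((S i.val).Nonempty → t i ∈ S i.val ∧
        ∀ v ∈ S i.val,
          ballCount U r (S i.val) v ≤ ballCount U r (S i.val) (t i)) ∧
      Ch i = (S i.val).filter (fun v => rowDist U v (t i) < r) ∧
      S (i.val + 1) = S i.val \ Ch i) ∧
    (∀ i : Fin k, ∀ u ∈ Ch i, σhat u = i) ∧
    ∀ u ∈ S k, ∀ j : Fin k,
      (∑ v ∈ Ch (σhat u), rowDist U u v) / ((Ch (σhat u)).card : ℝ) ≤
        (∑ v ∈ Ch j, rowDist U u v) / ((Ch j).card : ℝ)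

/-- `σhat` is a possible output of `USC(τ)` (with tuning constant `μ`). -/
def USCOutput {n k : ℕ} (A : Adj n) (τ μ : ℝ) (σhat : Fin n → Fin k) : Prop :=
  ∃ U : Matrix (Fin n) (Fin k) ℝ,
    LeadingEigenvectors (trim A τ) U ∧
    GreedyCluster U (μ * Real.sqrt ((k : ℝ) / n)) σhat

/-- `σhat` is a possible output of `NSC(τ)` (with tuning constant `μ`). -/
def NSCOutput {n k : ℕ} (A : Adj n) (τ μ : ℝ) (σhat : Fin n → Fin k) : Prop :=
  ∃ U : Matrix (Fin n) (Fin k) ℝ,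
    LeadingEigenvectors (lap (addReg A τ)) U ∧
    GreedyCluster U (μ * Real.sqrt ((k : ℝ) / n)) σhat

/-- The initializer `σ0 A u` is obtained by applying `USC(Cτ · d̄)` to the
leave-one-out matrix `A₋ᵤ` (identified with a graph on `n − 1` nodes via an
injection `e` avoiding `u`). -/
def USCInitDeg {n k : ℕ} (Cτ μ : ℝ) (σ0 : Adj n → Fin n → Fin n → Fin k) :
    Prop :=
  ∀ (A : Adj n) (u : Fin n), ∃ (m : ℕ) (e : Fin m → Fin n) (s' : Fin m → Fin k),
    m + 1 = n ∧ Function.Injective e ∧ (∀ w, e w ≠ u) ∧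
    USCOutput (fun v w => A (e v) (e w))
      (Cτ * avgDeg (fun v w => A (e v) (e w))) μ s' ∧
    ∀ w, σ0 A u (e w) = s' w

/-- The initializer `σ0 A u` is obtained by applying `NSC(Cτ · d̄)` to `A₋ᵤ`. -/
def NSCInitDeg {n k : ℕ} (Cτ μ : ℝ) (σ0 : Adj n → Fin n → Fin n → Fin k) :
    Prop :=
  ∀ (A : Adj n) (u : Fin n), ∃ (m : ℕ) (e : Fin m → Fin n) (s' : Fin m → Fin k),
    m + 1 = n ∧ Function.Injective e ∧ (∀ w, e w ≠ u) ∧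
    NSCOutput (fun v w => A (e v) (e w))
      (Cτ * avgDeg (fun v w => A (e v) (e w))) μ s' ∧
    ∀ w, σ0 A u (e w) = s' w

/-- The initializer `σ0 A u` is obtained by applying `USC(τ)` (with a fixed
regularization level `τ`) to `A₋ᵤ`. -/
def USCInitTau {n k : ℕ} (τ μ : ℝ) (σ0 : Adj n → Fin n → Fin n → Fin k) :
    Prop :=
  ∀ (A : Adj n) (u : Fin n), ∃ (m : ℕ) (e : Fin m → Fin n) (s' : Fin m → Fin k),
    m + 1 = n ∧ Function.Injective e ∧ (∀ w, e w ≠ u) ∧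
    USCOutput (fun v w => A (e v) (e w)) τ μ s' ∧
    ∀ w, σ0 A u (e w) = s' w

/-- The initializer `σ0 A u` is obtained by applying `NSC(τ)` (with a fixed
regularization level `τ`) to `A₋ᵤ`. -/
def NSCInitTau {n k : ℕ} (τ μ : ℝ) (σ0 : Adj n → Fin n → Fin n → Fin k) :
    Prop :=
  ∀ (A : Adj n) (u : Fin n), ∃ (m : ℕ) (e : Fin m → Fin n) (s' : Fin m → Fin k),
    m + 1 = n ∧ Function.Injective e ∧ (∀ w, e w ≠ u) ∧
    NSCOutput (fun v w => A (e v) (e w)) τ μ s' ∧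
    ∀ w, σ0 A u (e w) = s' w

/-- The minimax-rate threshold `exp(−(1−coef)·n·I*/2)` for `k = 2` and
`exp(−(1−coef)·n·I*/(βk))` for `k ≥ 3`. -/
def rate (β : ℝ) (n k : ℕ) (a b coef : ℝ) : ℝ :=
  if k = 2 then Real.exp (-((1 - coef) * ((n : ℝ) * renyiHalf n a b)) / 2)
  else Real.exp (-((1 - coef) * ((n : ℝ) * renyiHalf n a b)) / (β * k))

/-- `sup_{(B,σ)∈Θ₀} P{ℓ(σ,σ̂) ≥ rate} → 0` as `n → ∞`. -/
def SupSmall0 (β : ℝ) (k : ℕ → ℕ) (a b coef : ℕ → ℝ)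
    (σhat : ∀ n, Adj n → Fin n → Fin (k n)) : Prop :=
  ∀ ε' : ℝ, 0 < ε' → ∀ᶠ n in atTop,
    ∀ p ∈ Theta0 n (k n) (a n) (b n) β,
      prob (pMat p.1 p.2)
        { A | rate β n (k n) (a n) (b n) (coef n) ≤ misclass (σhat n A) p.2 }
        ≤ ε'

/-- `sup_{(B,σ)∈Θ} P{ℓ(σ,σ̂) ≥ rate} → 0` as `n → ∞`. -/
def SupSmallGen (β α : ℝ) (k : ℕ → ℕ) (a b lam coef : ℕ → ℝ)
    (σhat : ∀ n, Adj n → Fin n → Fin (k n)) : Prop :=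
  ∀ ε' : ℝ, 0 < ε' → ∀ᶠ n in atTop,
    ∀ p ∈ ThetaGen n (k n) (a n) (b n) (lam n) β α,
      prob (pMat p.1 p.2)
        { A | rate β n (k n) (a n) (b n) (coef n) ≤ misclass (σhat n A) p.2 }
        ≤ ε'

/-- The running assumption `0 < b < a ≤ (1−ε) n`. -/
def Baseline (ε : ℝ) (n : ℕ) (a b : ℝ) : Prop :=
  0 < b ∧ b < a ∧ a ≤ (1 - ε) * n

/-- `a ≍ b`. -/
def Comparable (a b : ℕ → ℝ) : Prop :=
  ∃ c1 c2 : ℝ, 0 < c1 ∧ ∀ n, c1 * b n ≤ a n ∧ a n ≤ c2 * b n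

/-- The constant `C_ε`. -/
def Ceps (ε : ℝ) : ℝ := (10 / 3) * ((2 - ε) / ((ε / 2) * Real.log (2 / ε)))

/-- The constant `c_ε`. -/
def ceps (ε : ℝ) : ℝ := min (1 / (10 * Ceps ε)) (ε / (2 - ε))

/-- The maximal entry `p_max` of a matrix. -/
def pmax {n : ℕ} (P : Matrix (Fin n) (Fin n) ℝ) : ℝ :=
  sSup { x : ℝ | ∃ u v, x = P u v }

/-- The matrix agreeing with `M` on `J × J` and zero elsewhere. -/
def restrictM {n : ℕ} (M : Matrix (Fin n) (Fin n) ℝ) (J : Finset (Fin n)) :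
    Matrix (Fin n) (Fin n) ℝ :=
  fun u v => if u ∈ J ∧ v ∈ J then M u v else 0

/-- The real-valued adjacency matrix. -/
def adjMat {n : ℕ} (A : Adj n) : Matrix (Fin n) (Fin n) ℝ := fun u v => aVal A u v

end

end SBM

namespace SBM

open Filter

/-- The entropy `t (1 + log (n / t))`, an upper bound for `log (n.choose t)`. -/
noncomputable def entropyBound (n t : ℝ) : ℝ := t * (1 + Real.log (n / t))

lemma sum_pow_le_of_le {g : ℝ} (hg : 1 < g) {Y : ℝ} (hY : 0 ≤ Y) (N : ℕ) :
    ∑ i ∈ Finset.range N, (if g ^ i ≤ Y then g ^ i else 0) ≤ g / (g - 1) * Y := by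
  have hg1 : 0 < g - 1 := by linarith
  induction N with
  | zero => simp; positivity
  | succ N ih =>
    by_cases h : g ^ N ≤ Y
    · calc ∑ i ∈ Finset.range (N + 1), (if g ^ i ≤ Y then g ^ i else 0)
          ≤ ∑ i ∈ Finset.range (N + 1), g ^ i := by
            refine Finset.sum_le_sum fun i _ => ?_
            split_ifs
            · exact le_rfl
            · positivity
        _ = (g ^ (N + 1) - 1) / (g - 1) := geom_sum_eq hg.ne' _
        _ ≤ g / (g - 1) * g ^ N := by
            rw [div_mul_eq_mul_div]
            gcongr
            rw [pow_succ']
            linarith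
        _ ≤ g / (g - 1) * Y := by gcongr
    · rw [Finset.sum_range_succ, if_neg h, add_zero]
      exact ih

lemma sum_two_pow_le {Y : ℝ} (hY : 0 ≤ Y) (N : ℕ) :
    ∑ i ∈ Finset.range N, (if (2 : ℝ) ^ i ≤ Y then (2 : ℝ) ^ i else 0) ≤ 2 * Y := by
  have := sum_pow_le_of_le (g := 2) (by norm_num) hY N
  norm_num at this ⊢
  linarith

lemma sum_sqrt_two_pow_le {Y : ℝ} (hY : 0 < Y) (N : ℕ) :
    ∑ i ∈ Finset.range N, (if (2 : ℝ) ^ i ≤ Y then √((2 : ℝ) ^ i / Y) else 0) ≤ 4 := by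
  have h2 : (4 / 3 : ℝ) ≤ √2 := Real.le_sqrt_of_sq_le (by norm_num)
  have h := sum_pow_le_of_le (g := √2) (by linarith) (Real.sqrt_nonneg Y) N
  have hY' : 0 < √Y := Real.sqrt_pos.2 hY
  have hp (i : ℕ) : √((2 : ℝ) ^ i) = √2 ^ i :=
    (Real.sqrt_eq_iff_mul_self_eq (by positivity) (by positivity)).2 (by
      rw [← mul_pow, Real.mul_self_sqrt (by norm_num)])
  calc ∑ i ∈ Finset.range N, (if (2 : ℝ) ^ i ≤ Y then √((2 : ℝ) ^ i / Y) else 0)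
      = (∑ i ∈ Finset.range N, (if √2 ^ i ≤ √Y then √2 ^ i else 0)) / √Y := by
        rw [Finset.sum_div]
        refine Finset.sum_congr rfl fun i _ => ?_
        simp only [← hp, Real.sqrt_le_sqrt_iff hY.le]
        split_ifs
        · rw [Real.sqrt_div (by positivity)]
        · simp
    _ ≤ √2 / (√2 - 1) * √Y / √Y := by gcongr
    _ = √2 / (√2 - 1) := by field_simp
    _ ≤ 4 := by
        rw [div_le_iff₀ (by linarith)]
        linarith

lemma one_sub_log_le {r : ℝ} (hr : 0 < r) : r * (1 - Real.log r) ≤ 2 * √r := by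
  have hs : 0 < √r := Real.sqrt_pos.2 hr
  have h := Real.log_le_sub_one_of_pos (inv_pos.2 hs)
  rw [Real.log_inv, Real.log_sqrt hr.le] at h
  have h2 : r * (√r)⁻¹ = √r := by
    rw [← div_eq_mul_inv, Real.div_sqrt]
  nlinarith

lemma entropyBound_le {n t : ℝ} (hn : 0 < n) (ht : 0 ≤ t) (j : ℕ) :
    entropyBound n t ≤ (1 + Real.log (4 ^ j)) * (3 * t + n / 16 ^ j) := by
  have hlog : 0 ≤ Real.log ((4 : ℝ) ^ j) := Real.log_nonneg (one_le_pow₀ (by norm_num))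
  rcases ht.eq_or_lt with rfl | ht
  · simp only [entropyBound, zero_mul]
    positivity
  have h16 : (16 : ℝ) ^ j = 4 ^ j * 4 ^ j := by rw [← mul_pow]; norm_num
  have hsplit : Real.log (n / t) = 2 * Real.log (√(n / (t * 16 ^ j))) + 2 * Real.log (4 ^ j) := by
    rw [Real.log_sqrt (by positivity), Real.log_div (by positivity) (by positivity),
      Real.log_div (by positivity) (by positivity), Real.log_mul (by positivity) (by positivity),
      h16, Real.log_mul (by positivity) (by positivity)]
    ring
  have hq : 0 < n / (t * 16 ^ j) := by positivity
  have h1 : Real.log (√(n / (t * 16 ^ j))) ≤ √(n / (t * 16 ^ j)) - 1 :=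
    Real.log_le_sub_one_of_pos (Real.sqrt_pos.2 hq)
  have h2 : 2 * √(n / (t * 16 ^ j)) ≤ 1 + n / (t * 16 ^ j) := by
    nlinarith [sq_nonneg (√(n / (t * 16 ^ j)) - 1), Real.sq_sqrt hq.le]
  have h3 : t * (n / (t * 16 ^ j)) = n / 16 ^ j := by field_simp
  have h4 : 0 ≤ n / 16 ^ j := by positivity
  have h5 : t * (1 + Real.log (n / t)) ≤
      t * (2 * (1 + Real.log (4 ^ j)) + n / (t * 16 ^ j)) := by
    refine mul_le_mul_of_nonneg_left ?_ ht.le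
    rw [hsplit]
    linarith
  rw [entropyBound]
  nlinarith [mul_nonneg hlog h4, mul_nonneg hlog ht.le]

lemma entropyBound_div_le {n t D : ℝ} (hn : 0 < n) (ht : 0 ≤ t) (hD : 0 < D) (i j : ℕ)
    (hij : (2 : ℝ) ^ i ≤ D * 2 ^ j) (hD' : D ≤ 2 ^ (i + j)) :
    2 ^ (i + j) * entropyBound n t / (1 + Real.log (2 ^ (i + j) / D)) ≤
      2 * D * √(2 ^ i / (D * 2 ^ j)) * (3 * (4 ^ j * t) + n / 4 ^ j) := by
  set r : ℝ := 2 ^ i / (D * 2 ^ j) with hr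
  have hr0 : 0 < r := by positivity
  have hr1 : r ≤ 1 := by rw [hr, div_le_one (by positivity)]; exact hij
  have h4 : (4 : ℝ) ^ j = 2 ^ j * 2 ^ j := by rw [← mul_pow]; norm_num
  have hq : (2 : ℝ) ^ (i + j) / D = r * 4 ^ j := by
    rw [hr, h4, pow_add]; field_simp
  have hq1 : 1 ≤ r * (4 : ℝ) ^ j := by
    rw [← hq, one_le_div hD]; exact hD'
  have hlq : 0 ≤ Real.log (r * 4 ^ j) := Real.log_nonneg hq1
  have hlogq : Real.log (r * 4 ^ j) = Real.log r + Real.log (4 ^ j) :=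
    Real.log_mul hr0.ne' (by positivity)
  have hlr : Real.log r ≤ 0 := Real.log_nonpos hr0.le hr1
  have hX : 1 + Real.log ((4 : ℝ) ^ j) ≤
      (1 - Real.log r) * (1 + Real.log (r * 4 ^ j)) := by
    nlinarith [mul_nonneg (neg_nonneg.2 hlr) hlq]
  have h16 : (16 : ℝ) ^ j = 4 ^ j * 4 ^ j := by rw [← mul_pow]; norm_num
  rw [hq, div_le_iff₀ (by linarith)]
  have h2 : (2 : ℝ) ^ (i + j) = D * r * 4 ^ j := by
    rw [mul_assoc, ← hq]; field_simp
  rw [h2]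
  calc D * r * 4 ^ j * entropyBound n t
      ≤ D * r * 4 ^ j * ((1 + Real.log (4 ^ j)) * (3 * t + n / 16 ^ j)) := by
        gcongr; exact entropyBound_le hn ht j
    _ ≤ D * r * 4 ^ j * (((1 - Real.log r) * (1 + Real.log (r * 4 ^ j))) *
          (3 * t + n / 16 ^ j)) := by gcongr
    _ = D * (r * (1 - Real.log r)) * (1 + Real.log (r * 4 ^ j)) *
          (3 * (4 ^ j * t) + n / 4 ^ j) := by
        rw [h16]; field_simp
    _ ≤ D * (2 * √r) * (1 + Real.log (r * 4 ^ j)) * (3 * (4 ^ j * t) + n / 4 ^ j) := by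
        have := one_sub_log_le hr0
        gcongr
    _ = _ := by ring

lemma level_term_le {n c D s t e : ℝ} (hn : 0 < n) (hc : 0 ≤ c) (hD : 0 < D)
    (hs : 0 ≤ s) (ht : 0 ≤ t) (i j : ℕ)
    (hes : e ≤ D ^ 2 * s) (het : e ≤ D ^ 2 * t)
    (hdisc : D ≤ 2 ^ (i + j) → (1 + Real.log (2 ^ (i + j) / D)) * e ≤
      Real.exp 1 * (2 ^ (i + j) / D) * (D ^ 2 * s * t / n) +
        c * (entropyBound n s + entropyBound n t)) :
    (if D ≤ 2 ^ (i + j) then 2 ^ (i + j) * e else 0) ≤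
      (if (2 : ℝ) ^ j ≤ 2 ^ i / D then (2 : ℝ) ^ j else 0) * (D ^ 2 * (2 ^ i * s)) +
      (if (2 : ℝ) ^ i ≤ 2 ^ j / D then (2 : ℝ) ^ i else 0) * (D ^ 2 * (2 ^ j * t)) +
      Real.exp 1 * D / n * ((4 ^ i * s) * (4 ^ j * t)) +
      c * ((if (2 : ℝ) ^ i ≤ D * 2 ^ j then √(2 ^ i / (D * 2 ^ j)) else 0) *
        (2 * D * (3 * (4 ^ j * t) + n / 4 ^ j))) +
      c * ((if (2 : ℝ) ^ j ≤ D * 2 ^ i then √(2 ^ j / (D * 2 ^ i)) else 0) *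
        (2 * D * (3 * (4 ^ i * s) + n / 4 ^ i))) := by
  have h1 : 0 ≤ (if (2 : ℝ) ^ j ≤ 2 ^ i / D then (2 : ℝ) ^ j else 0) := by
    split_ifs <;> positivity
  have h2 : 0 ≤ (if (2 : ℝ) ^ i ≤ 2 ^ j / D then (2 : ℝ) ^ i else 0) := by
    split_ifs <;> positivity
  have h3 : 0 ≤ (if (2 : ℝ) ^ i ≤ D * 2 ^ j then √(2 ^ i / (D * 2 ^ j)) else 0) := by
    split_ifs <;> positivity
  have h4 : 0 ≤ (if (2 : ℝ) ^ j ≤ D * 2 ^ i then √(2 ^ j / (D * 2 ^ i)) else 0) := by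
    split_ifs <;> positivity
  have p1 := mul_nonneg h1 (show 0 ≤ D ^ 2 * (2 ^ i * s) by positivity)
  have p2 := mul_nonneg h2 (show 0 ≤ D ^ 2 * (2 ^ j * t) by positivity)
  have p3 : 0 ≤ Real.exp 1 * D / n * ((4 ^ i * s) * (4 ^ j * t)) := by positivity
  have p4 := mul_nonneg hc (mul_nonneg h3
    (show 0 ≤ 2 * D * (3 * (4 ^ j * t) + n / 4 ^ j) by positivity))
  have p5 := mul_nonneg hc (mul_nonneg h4
    (show 0 ≤ 2 * D * (3 * (4 ^ i * s) + n / 4 ^ i) by positivity))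
  by_cases hq : D ≤ 2 ^ (i + j)
  swap
  · rw [if_neg hq]; linarith
  rw [if_pos hq]
  by_cases c1 : (2 : ℝ) ^ j ≤ 2 ^ i / D
  · have : 2 ^ (i + j) * e ≤ 2 ^ j * (D ^ 2 * (2 ^ i * s)) := by
      calc 2 ^ (i + j) * e ≤ 2 ^ (i + j) * (D ^ 2 * s) := by gcongr
        _ = _ := by ring
    rw [if_pos c1] at p1 ⊢
    linarith
  by_cases c2 : (2 : ℝ) ^ i ≤ 2 ^ j / D
  · have : 2 ^ (i + j) * e ≤ 2 ^ i * (D ^ 2 * (2 ^ j * t)) := by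
      calc 2 ^ (i + j) * e ≤ 2 ^ (i + j) * (D ^ 2 * t) := by gcongr
        _ = _ := by ring
    rw [if_pos c2] at p2 ⊢
    linarith
  rw [not_le, div_lt_iff₀ hD, mul_comm] at c1 c2
  rw [if_pos c1.le, if_pos c2.le]
  have hL : 0 ≤ Real.log (2 ^ (i + j) / D) := Real.log_nonneg ((one_le_div hD).2 hq)
  have hd := hdisc hq
  have e1 := entropyBound_div_le hn ht hD i j c1.le hq
  have e2 := entropyBound_div_le hn hs hD j i c2.le (by rwa [add_comm])
  rw [add_comm j i] at e2
  have key : e ≤ Real.exp 1 * (2 ^ (i + j) / D) * (D ^ 2 * s * t / n) +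
      c * (entropyBound n s / (1 + Real.log (2 ^ (i + j) / D)) +
        entropyBound n t / (1 + Real.log (2 ^ (i + j) / D))) := by
    rw [← add_div]
    have : e ≤ (Real.exp 1 * (2 ^ (i + j) / D) * (D ^ 2 * s * t / n) +
        c * (entropyBound n s + entropyBound n t)) / (1 + Real.log (2 ^ (i + j) / D)) := by
      rw [le_div_iff₀ (by linarith), mul_comm]; exact hd
    refine this.trans ?_
    rw [add_div]
    exact add_le_add (div_le_self (by positivity) (by linarith)) (mul_div_assoc _ _ _).le
  have h44 (k : ℕ) : (4 : ℝ) ^ k = 2 ^ k * 2 ^ k := by rw [← mul_pow]; norm_num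
  have f1 : 2 ^ (i + j) * (Real.exp 1 * (2 ^ (i + j) / D) * (D ^ 2 * s * t / n)) =
      Real.exp 1 * D / n * ((4 ^ i * s) * (4 ^ j * t)) := by
    rw [h44, h44, pow_add]
    field_simp
  rw [mul_div_assoc] at e1 e2
  calc 2 ^ (i + j) * e ≤ 2 ^ (i + j) * (Real.exp 1 * (2 ^ (i + j) / D) * (D ^ 2 * s * t / n) +
      c * (entropyBound n s / (1 + Real.log (2 ^ (i + j) / D)) +
        entropyBound n t / (1 + Real.log (2 ^ (i + j) / D)))) := by gcongr
    _ = Real.exp 1 * D / n * ((4 ^ i * s) * (4 ^ j * t)) +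
      c * (2 ^ (i + j) * (entropyBound n t / (1 + Real.log (2 ^ (i + j) / D)))) +
      c * (2 ^ (i + j) * (entropyBound n s / (1 + Real.log (2 ^ (i + j) / D)))) := by
        rw [← f1]; ring
    _ ≤ Real.exp 1 * D / n * ((4 ^ i * s) * (4 ^ j * t)) +
      c * (2 * D * √(2 ^ i / (D * 2 ^ j)) * (3 * (4 ^ j * t) + n / 4 ^ j)) +
      c * (2 * D * √(2 ^ j / (D * 2 ^ i)) * (3 * (4 ^ i * s) + n / 4 ^ i)) := by gcongr
    _ ≤ _ := by linarith

lemma sum_inv_four_pow_le (N : ℕ) : ∑ i ∈ Finset.range N, ((4 : ℝ) ^ i)⁻¹ ≤ 2 := by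
  have h : ∑ i ∈ Finset.range N, ((4 : ℝ) ^ i)⁻¹ = 4 / 3 * (1 - ((4 : ℝ) ^ N)⁻¹) := by
    induction N with
    | zero => simp
    | succ N ih =>
      rw [Finset.sum_range_succ, ih, pow_succ]
      field_simp
      ring
  have : 0 < ((4 : ℝ) ^ N)⁻¹ := by positivity
  linarith

/-- Summation of the dyadic blocks of the heavy pairs. -/
lemma sum_levels_le {n c D : ℝ} (hn : 0 < n) (hc : 0 ≤ c) (hD : 0 < D) (N : ℕ)
    (s t : ℕ → ℝ) (e : ℕ → ℕ → ℝ) (hs : ∀ i, 0 ≤ s i) (ht : ∀ j, 0 ≤ t j)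
    (hs16 : ∑ i ∈ Finset.range N, 4 ^ i * s i ≤ 16 * n)
    (ht16 : ∑ j ∈ Finset.range N, 4 ^ j * t j ≤ 16 * n)
    (hes : ∀ i j, e i j ≤ D ^ 2 * s i) (het : ∀ i j, e i j ≤ D ^ 2 * t j)
    (hdisc : ∀ i < N, ∀ j < N, D ≤ 2 ^ (i + j) → (1 + Real.log (2 ^ (i + j) / D)) * e i j ≤
      Real.exp 1 * (2 ^ (i + j) / D) * (D ^ 2 * s i * t j / n) +
        c * (entropyBound n (s i) + entropyBound n (t j))) :
    ∑ i ∈ Finset.range N, ∑ j ∈ Finset.range N,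
      (if D ≤ 2 ^ (i + j) then 2 ^ (i + j) * e i j else 0) ≤
      (832 + 800 * c) * (n * D) := by
  set R := Finset.range N
  have h44 (k : ℕ) : (4 : ℝ) ^ k = 2 ^ k * 2 ^ k := by rw [← mul_pow]; norm_num
  have hdeg (r : ℕ → ℝ) (hr : ∀ i, 0 ≤ r i) (hr16 : ∑ i ∈ R, 4 ^ i * r i ≤ 16 * n) :
      ∑ i ∈ R, ∑ j ∈ R, (if (2 : ℝ) ^ j ≤ 2 ^ i / D then (2 : ℝ) ^ j else 0) *
        (D ^ 2 * (2 ^ i * r i)) ≤ 32 * (n * D) := by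
    calc _ ≤ ∑ i ∈ R, (2 * (2 ^ i / D)) * (D ^ 2 * (2 ^ i * r i)) := by
          refine Finset.sum_le_sum fun i _ => ?_
          rw [← Finset.sum_mul]
          have := hr i
          gcongr
          exact sum_two_pow_le (by positivity) N
      _ = 2 * D * ∑ i ∈ R, 4 ^ i * r i := by
          rw [Finset.mul_sum]
          refine Finset.sum_congr rfl fun i _ => ?_
          rw [h44]; field_simp
      _ ≤ 2 * D * (16 * n) := by gcongr
      _ = _ := by ring
  have hent (r : ℕ → ℝ) (hr : ∀ i, 0 ≤ r i) (hr16 : ∑ i ∈ R, 4 ^ i * r i ≤ 16 * n) :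
      ∑ i ∈ R, ∑ j ∈ R, c * ((if (2 : ℝ) ^ j ≤ D * 2 ^ i then √(2 ^ j / (D * 2 ^ i)) else 0) *
        (2 * D * (3 * (4 ^ i * r i) + n / 4 ^ i))) ≤ 400 * c * (n * D) := by
    calc _ ≤ ∑ i ∈ R, c * (4 * (2 * D * (3 * (4 ^ i * r i) + n / 4 ^ i))) := by
          refine Finset.sum_le_sum fun i _ => ?_
          rw [← Finset.mul_sum, ← Finset.sum_mul]
          have := hr i
          gcongr
          exact sum_sqrt_two_pow_le (by positivity) N
      _ = 8 * c * D * (3 * ∑ i ∈ R, 4 ^ i * r i + n * ∑ i ∈ R, ((4 : ℝ) ^ i)⁻¹) := by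
          rw [Finset.mul_sum, Finset.mul_sum, ← Finset.sum_add_distrib, Finset.mul_sum]
          refine Finset.sum_congr rfl fun i _ => ?_
          ring
      _ ≤ 8 * c * D * (3 * (16 * n) + n * 2) := by
          gcongr
          exact sum_inv_four_pow_le N
      _ = _ := by ring
  have hmean : ∑ i ∈ R, ∑ j ∈ R, Real.exp 1 * D / n * ((4 ^ i * s i) * (4 ^ j * t j)) ≤
      768 * (n * D) := by
    simp_rw [← Finset.mul_sum, ← Finset.sum_mul]
    have hT : 0 ≤ ∑ j ∈ R, 4 ^ j * t j :=
      Finset.sum_nonneg fun j _ => mul_nonneg (by positivity) (ht j)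
    have hS : 0 ≤ ∑ i ∈ R, 4 ^ i * s i :=
      Finset.sum_nonneg fun i _ => mul_nonneg (by positivity) (hs i)
    have hexp := Real.exp_one_lt_three.le
    calc _ ≤ 3 * D / n * ((16 * n) * (16 * n)) := by gcongr
      _ = _ := by field_simp; norm_num
  calc _ ≤ ∑ i ∈ R, ∑ j ∈ R, _ := Finset.sum_le_sum fun i hi => Finset.sum_le_sum fun j hj =>
        level_term_le hn hc hD (hs i) (ht j) i j (hes i j) (het i j)
          (hdisc i (Finset.mem_range.1 hi) j (Finset.mem_range.1 hj))
    _ ≤ 32 * (n * D) + 32 * (n * D) + 768 * (n * D) + 400 * c * (n * D) +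
        400 * c * (n * D) := by
        simp_rw [Finset.sum_add_distrib]
        refine add_le_add (add_le_add (add_le_add (add_le_add (hdeg s hs hs16) ?_) hmean) ?_)
          (hent s hs hs16)
        · rw [Finset.sum_comm]; exact hdeg t ht ht16
        · rw [Finset.sum_comm]; exact hent t ht ht16
    _ = _ := by ring

/-- The dyadic level set of an integer vector. -/
def dyadicLevel {n : ℕ} (z : Fin n → ℤ) (i : ℕ) : Finset (Fin n) :=
  Finset.univ.filter fun u => z u ≠ 0 ∧ Nat.log 2 (z u).natAbs = i

lemma natAbs_bounds {a : ℤ} (ha : a ≠ 0) :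
    (2 : ℝ) ^ Nat.log 2 a.natAbs ≤ |(a : ℝ)| ∧
      |(a : ℝ)| ≤ 2 * 2 ^ Nat.log 2 a.natAbs := by
  have h0 : a.natAbs ≠ 0 := Int.natAbs_ne_zero.2 ha
  have h1 := Nat.pow_log_le_self 2 h0
  have h2 := (Nat.lt_pow_succ_log_self (b := 2) (by norm_num) a.natAbs).le
  have hcast : ((a.natAbs : ℕ) : ℝ) = |(a : ℝ)| := by
    rw [Nat.cast_natAbs, Int.cast_abs]
  rw [← hcast]
  constructor
  · exact_mod_cast h1
  · rw [← pow_succ']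
    exact_mod_cast h2

lemma sum_four_pow_mul_card_le {n : ℕ} (z : Fin n → ℤ) (N : ℕ) :
    ∑ i ∈ Finset.range N, (4 : ℝ) ^ i * ((dyadicLevel z i).card : ℝ) ≤ ∑ u, (z u : ℝ) ^ 2 := by
  have h44 (k : ℕ) : (4 : ℝ) ^ k = (2 ^ k) ^ 2 := by rw [← pow_mul, mul_comm, pow_mul]; norm_num
  calc ∑ i ∈ Finset.range N, (4 : ℝ) ^ i * ((dyadicLevel z i).card : ℝ)
      = ∑ i ∈ Finset.range N, ∑ u, (if z u ≠ 0 ∧ Nat.log 2 (z u).natAbs = i then (4 : ℝ) ^ i else 0) := by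
        refine Finset.sum_congr rfl fun i _ => ?_
        rw [← Finset.sum_filter, Finset.sum_const, nsmul_eq_mul, mul_comm]
        rfl
    _ = ∑ u, ∑ i ∈ Finset.range N, (if z u ≠ 0 ∧ Nat.log 2 (z u).natAbs = i then (4 : ℝ) ^ i else 0) :=
        Finset.sum_comm
    _ ≤ ∑ u, (z u : ℝ) ^ 2 := by
        refine Finset.sum_le_sum fun u _ => ?_
        by_cases hz : z u = 0
        · simp [hz]
        · simp only [ne_eq, hz, not_false_eq_true, true_and]
          rw [Finset.sum_ite_eq]
          split_ifs
          · rw [h44, ← sq_abs (z u : ℝ)]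
            have := (natAbs_bounds hz).1
            gcongr
          · positivity

lemma log_natAbs_lt {n : ℕ} {z : Fin n → ℤ} (hz : ∑ u, (z u : ℝ) ^ 2 ≤ 16 * n) (u : Fin n) :
    Nat.log 2 (z u).natAbs < 16 * n + 1 := by
  have h1 : (z u : ℝ) ^ 2 ≤ 16 * n :=
    (Finset.single_le_sum (f := fun u => (z u : ℝ) ^ 2) (fun i _ => sq_nonneg _)
      (Finset.mem_univ u)).trans hz
  have h2 : (z u).natAbs ^ 2 ≤ 16 * n := by
    have : (((z u).natAbs : ℕ) : ℝ) ^ 2 ≤ 16 * n := by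
      rw [Nat.cast_natAbs, Int.cast_abs, sq_abs]; exact h1
    exact_mod_cast this
  have h3 := Nat.log_le_self 2 (z u).natAbs
  nlinarith

/-- Deterministic control of the heavy pairs under a discrepancy property. -/
lemma heavy_sum_le {n : ℕ} (hn : 0 < n) {c D : ℝ} (hc : 0 ≤ c) (hD : 0 < D)
    (E : Fin n → Fin n → ℝ) (hE : ∀ u v, 0 ≤ E u v) (J : Finset (Fin n))
    (hrow : ∀ u ∈ J, ∑ v, E u v ≤ D ^ 2) (hcol : ∀ v ∈ J, ∑ u, E u v ≤ D ^ 2)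
    (hdisc : ∀ S T : Finset (Fin n), S.Nonempty → T.Nonempty → ∀ l < 32 * n + 2,
      D ≤ 2 ^ l → (1 + Real.log (2 ^ l / D)) * ∑ u ∈ S, ∑ v ∈ T, E u v ≤
        Real.exp 1 * (2 ^ l / D) * (D ^ 2 * S.card * T.card / n) +
        c * (entropyBound n S.card + entropyBound n T.card))
    (z w : Fin n → ℤ) (hz : ∑ u, (z u : ℝ) ^ 2 ≤ 16 * n) (hw : ∑ u, (w u : ℝ) ^ 2 ≤ 16 * n)
    (hzJ : ∀ u, z u ≠ 0 → u ∈ J) (hwJ : ∀ u, w u ≠ 0 → u ∈ J) :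
    ∑ u, ∑ v, E u v * (if 16 * D < |(z u : ℝ) * w v| then |(z u : ℝ) * w v| else 0) ≤
      4 * ((832 + 800 * c) * (n * D)) := by
  have hn' : (0 : ℝ) < n := by exact_mod_cast hn
  set N := 16 * n + 1 with hN
  have hent (s : ℕ) (hs : s ≤ n) : 0 ≤ entropyBound n s := by
    rcases s.eq_zero_or_pos with rfl | h0
    · simp [entropyBound]
    · have : (1 : ℝ) ≤ n / s := by
        rw [one_le_div (by exact_mod_cast h0)]; exact_mod_cast hs
      have := Real.log_nonneg this
      rw [entropyBound]; positivity
  have hcard (S : Finset (Fin n)) : S.card ≤ n := by simpa using S.card_le_univ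
  have key := sum_levels_le hn' hc hD N (fun i => ((dyadicLevel z i).card : ℝ))
    (fun j => ((dyadicLevel w j).card : ℝ))
    (fun i j => ∑ u ∈ dyadicLevel z i, ∑ v ∈ dyadicLevel w j, E u v)
    (fun _ => by positivity) (fun _ => by positivity)
    ((sum_four_pow_mul_card_le z N).trans hz) ((sum_four_pow_mul_card_le w N).trans hw)
    (fun i j => by
      calc _ ≤ ∑ u ∈ dyadicLevel z i, D ^ 2 := Finset.sum_le_sum fun u hu =>
            (Finset.sum_le_sum_of_subset_of_nonneg (Finset.subset_univ _)
              fun v _ _ => hE u v).trans (hrow u (hzJ u (Finset.mem_filter.1 hu).2.1))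
        _ = _ := by rw [Finset.sum_const, nsmul_eq_mul, mul_comm])
    (fun i j => by
      rw [Finset.sum_comm]
      calc _ ≤ ∑ v ∈ dyadicLevel w j, D ^ 2 := Finset.sum_le_sum fun v hv =>
            (Finset.sum_le_sum_of_subset_of_nonneg (Finset.subset_univ _)
              fun u _ _ => hE u v).trans (hcol v (hwJ v (Finset.mem_filter.1 hv).2.1))
        _ = _ := by rw [Finset.sum_const, nsmul_eq_mul, mul_comm])
    (fun i hi j hj hq => by
      rcases (dyadicLevel z i).eq_empty_or_nonempty with h | h
      · simp only [h, Finset.sum_empty, mul_zero, Finset.card_empty, Nat.cast_zero, zero_mul,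
          zero_div, zero_add]
        exact mul_nonneg hc (add_nonneg (by simpa using hent 0 (by simp)) (hent _ (hcard _)))
      rcases (dyadicLevel w j).eq_empty_or_nonempty with h' | h'
      · simp only [h', Finset.sum_empty, Finset.sum_const_zero, mul_zero, Finset.card_empty,
          Nat.cast_zero, zero_div, zero_add]
        exact mul_nonneg hc (add_nonneg (hent _ (hcard _)) (by simpa using hent 0 (by simp)))
      exact hdisc _ _ h h' (i + j) (by omega) hq)
  refine le_trans ?_ (mul_le_mul_of_nonneg_left key (by norm_num : (0 : ℝ) ≤ 4))
  have expand (i j : ℕ) :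
      (if D ≤ 2 ^ (i + j) then 2 ^ (i + j) * ∑ u ∈ dyadicLevel z i, ∑ v ∈ dyadicLevel w j, E u v
        else 0) = ∑ u, ∑ v, (if z u ≠ 0 ∧ Nat.log 2 (z u).natAbs = i then
          (if w v ≠ 0 ∧ Nat.log 2 (w v).natAbs = j then
            (if D ≤ 2 ^ (i + j) then 2 ^ (i + j) * E u v else 0) else 0) else 0) := by
    simp only [dyadicLevel, Finset.sum_filter]
    split_ifs with hq
    · rw [Finset.mul_sum]
      refine Finset.sum_congr rfl fun u _ => ?_
      split_ifs with hu
      · rw [Finset.mul_sum]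
        refine Finset.sum_congr rfl fun v _ => ?_
        split_ifs <;> simp
      · simp
    · simp
  simp_rw [expand]
  have swap : ∑ i ∈ Finset.range N, ∑ j ∈ Finset.range N, ∑ u, ∑ v,
        (if z u ≠ 0 ∧ Nat.log 2 (z u).natAbs = i then
          (if w v ≠ 0 ∧ Nat.log 2 (w v).natAbs = j then
            (if D ≤ 2 ^ (i + j) then 2 ^ (i + j) * E u v else 0) else 0) else 0) =
      ∑ u, ∑ v, ∑ i ∈ Finset.range N, ∑ j ∈ Finset.range N,
        (if z u ≠ 0 ∧ Nat.log 2 (z u).natAbs = i then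
          (if w v ≠ 0 ∧ Nat.log 2 (w v).natAbs = j then
            (if D ≤ 2 ^ (i + j) then 2 ^ (i + j) * E u v else 0) else 0) else 0) := by
    simp_rw [Finset.sum_comm (s := Finset.range N) (t := Finset.univ)]
  rw [swap, Finset.mul_sum]
  refine Finset.sum_le_sum fun u _ => ?_
  rw [Finset.mul_sum]
  refine Finset.sum_le_sum fun v _ => ?_
  have hnn : 0 ≤ ∑ i ∈ Finset.range N, ∑ j ∈ Finset.range N,
        (if z u ≠ 0 ∧ Nat.log 2 (z u).natAbs = i then
          (if w v ≠ 0 ∧ Nat.log 2 (w v).natAbs = j then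
            (if D ≤ 2 ^ (i + j) then 2 ^ (i + j) * E u v else 0) else 0) else 0) := by
    refine Finset.sum_nonneg fun i _ => Finset.sum_nonneg fun j _ => ?_
    have := hE u v
    split_ifs <;> positivity
  by_cases hheavy : 16 * D < |(z u : ℝ) * w v|
  swap
  · rw [if_neg hheavy, mul_zero]
    linarith
  have hzu : z u ≠ 0 := fun h => by
    rw [h] at hheavy; simp at hheavy; linarith
  have hwv : w v ≠ 0 := fun h => by
    rw [h] at hheavy; simp at hheavy; linarith
  rw [if_pos hheavy]
  simp only [ne_eq, hzu, hwv, not_false_eq_true, true_and]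
  have hb : |(z u : ℝ) * w v| ≤ 4 * 2 ^ (Nat.log 2 (z u).natAbs + Nat.log 2 (w v).natAbs) := by
    rw [abs_mul, pow_add]
    calc _ ≤ (2 * 2 ^ Nat.log 2 (z u).natAbs) * (2 * 2 ^ Nat.log 2 (w v).natAbs) :=
          mul_le_mul (natAbs_bounds hzu).2 (natAbs_bounds hwv).2 (abs_nonneg _) (by positivity)
      _ = _ := by ring
  rw [Finset.sum_eq_single_of_mem _ (Finset.mem_range.2 (log_natAbs_lt hz u))
      (fun i _ hi => Finset.sum_eq_zero fun j _ => if_neg hi.symm),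
    Finset.sum_eq_single_of_mem _ (Finset.mem_range.2 (log_natAbs_lt hw v))
      (fun j _ hj => by rw [if_pos rfl, if_neg hj.symm]),
    if_pos rfl, if_pos rfl, if_pos (by linarith)]
  nlinarith [mul_le_mul_of_nonneg_left hb (hE u v)]

lemma exists_int_trunc (a : ℝ) : ∃ z : ℤ, |(z : ℝ)| ≤ |a| ∧ |a - z| ≤ 1 := by
  rcases le_total 0 a with h | h
  · refine ⟨⌊a⌋, ?_, ?_⟩
    · rw [abs_of_nonneg h, abs_of_nonneg (by exact_mod_cast Int.floor_nonneg.2 h)]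
      exact Int.floor_le a
    · rw [abs_le]
      constructor <;> linarith [Int.floor_le a, Int.lt_floor_add_one a]
  · refine ⟨⌈a⌉, ?_, ?_⟩
    · have : ((⌈a⌉ : ℤ) : ℝ) ≤ 0 := by exact_mod_cast Int.ceil_le.2 (by simpa using h)
      rw [abs_of_nonpos h, abs_of_nonpos this]
      linarith [Int.le_ceil a]
    · rw [abs_le]
      constructor <;> linarith [Int.le_ceil a, Int.ceil_lt_add_one a]

lemma exists_lattice_approx {n : ℕ} (hn : 0 < n) (x : EuclideanSpace ℝ (Fin n)) (hx : ‖x‖ = 1) :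
    ∃ z : Fin n → ℤ, ∑ u, (z u : ℝ) ^ 2 ≤ 16 * n ∧
      ‖WithLp.toLp 2 (fun u => (z u : ℝ) / (4 * √n))‖ ≤ 1 ∧
      ‖x - WithLp.toLp 2 (fun u => (z u : ℝ) / (4 * √n))‖ ≤ 1 / 4 := by
  have hn' : (0 : ℝ) < n := by exact_mod_cast hn
  have hs : 0 < √(n : ℝ) := Real.sqrt_pos.2 hn'
  have hsq : √(n : ℝ) ^ 2 = n := Real.sq_sqrt hn'.le
  choose z hz1 hz2 using fun u => exists_int_trunc (4 * √n * x u)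
  have hx2 : ∑ u, x u ^ 2 = 1 := by
    have := EuclideanSpace.real_norm_sq_eq x
    rw [← this, hx]; norm_num
  have hsum : ∑ u, (z u : ℝ) ^ 2 ≤ 16 * n := by
    calc _ ≤ ∑ u, (4 * √n * x u) ^ 2 := Finset.sum_le_sum fun u _ => sq_le_sq.2 (hz1 u)
      _ = 16 * n * ∑ u, x u ^ 2 := by
        rw [Finset.mul_sum]
        refine Finset.sum_congr rfl fun u _ => ?_
        rw [mul_pow, mul_pow, hsq]; norm_num
      _ = _ := by rw [hx2, mul_one]
  refine ⟨z, hsum, ?_, ?_⟩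
  · rw [← sq_le_one_iff₀ (norm_nonneg _), EuclideanSpace.real_norm_sq_eq]
    calc _ = (∑ u, (z u : ℝ) ^ 2) / (16 * n) := by
          rw [Finset.sum_div]
          refine Finset.sum_congr rfl fun u _ => ?_
          simp only [div_pow, mul_pow, hsq]; norm_num
      _ ≤ 1 := by rw [div_le_one (by positivity)]; exact hsum
  · refine le_of_sq_le_sq ?_ (by norm_num)
    rw [EuclideanSpace.real_norm_sq_eq]
    calc _ = ∑ u, (4 * √n * x u - z u) ^ 2 / (16 * n) := by
          refine Finset.sum_congr rfl fun u _ => ?_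
          have : (x u - (z u : ℝ) / (4 * √n)) = (4 * √n * x u - z u) / (4 * √n) := by field_simp
          simp only [PiLp.sub_apply, this, div_pow, mul_pow, hsq]; norm_num
      _ ≤ ∑ u : Fin n, 1 / (16 * (n : ℝ)) := by
          refine Finset.sum_le_sum fun u _ => ?_
          gcongr
          rw [← sq_abs]
          exact pow_le_one₀ (abs_nonneg _) (hz2 u)
      _ = (1 / 4) ^ 2 := by
          rw [Finset.sum_const, Finset.card_univ, Fintype.card_fin, nsmul_eq_mul]
          field_simp; norm_num

lemma sqnorm_eq_norm {n : ℕ} (x : Fin n → ℝ) : sqnorm x = ‖WithLp.toLp 2 x‖ := by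
  rw [EuclideanSpace.norm_eq]
  simp [sqnorm]

/-- The operator norm is controlled by the bilinear form on a lattice in the unit ball. -/
lemma opNorm_le_of_lattice {n : ℕ} (hn : 0 < n) (M : Matrix (Fin n) (Fin n) ℝ) {b : ℝ} (hb : 0 ≤ b)
    (h : ∀ z w : Fin n → ℤ, ∑ u, (z u : ℝ) ^ 2 ≤ 16 * n → ∑ u, (w u : ℝ) ^ 2 ≤ 16 * n →
      |∑ u, ∑ v, M u v * ((z u : ℝ) * w v)| ≤ b * n) :
    opNorm M ≤ b / 8 := by
  have hn' : (0 : ℝ) < n := by exact_mod_cast hn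
  have hsq : √(n : ℝ) ^ 2 = n := Real.sq_sqrt hn'.le
  set T : EuclideanSpace ℝ (Fin n) →L[ℝ] EuclideanSpace ℝ (Fin n) :=
    Matrix.toEuclideanCLM (𝕜 := ℝ) M with hT
  have hTapp (x : Fin n → ℝ) : T (WithLp.toLp 2 x) = WithLp.toLp 2 (M.mulVec x) := by
    rw [hT, Matrix.toEuclideanCLM_toLp]
  have hunit (x y : EuclideanSpace ℝ (Fin n)) (hx : ‖x‖ = 1) (hy : ‖y‖ = 1) :
      inner ℝ y (T x) ≤ b / 16 + ‖T‖ / 2 := by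
    obtain ⟨w, hw, hw1, hw2⟩ := exists_lattice_approx hn x hx
    obtain ⟨z, hz, hz1, hz2⟩ := exists_lattice_approx hn y hy
    set x' : EuclideanSpace ℝ (Fin n) := WithLp.toLp 2 (fun u => (w u : ℝ) / (4 * √n)) with hx'
    set y' : EuclideanSpace ℝ (Fin n) := WithLp.toLp 2 (fun u => (z u : ℝ) / (4 * √n)) with hy'
    have hsplit : inner ℝ y (T x) =
        inner ℝ y' (T x') + inner ℝ (y - y') (T x) + inner ℝ y' (T (x - x')) := by
      simp only [map_sub, inner_sub_left, inner_sub_right]; ring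
    have h1 : inner ℝ y' (T x') ≤ b / 16 := by
      have : inner ℝ y' (T x') = (∑ u, ∑ v, M u v * ((z u : ℝ) * w v)) / (16 * n) := by
        rw [hx', hTapp, hy', EuclideanSpace.inner_toLp_toLp]
        simp only [dotProduct, Matrix.mulVec, star_trivial, Finset.sum_mul, Finset.sum_div]
        refine Finset.sum_congr rfl fun u _ => Finset.sum_congr rfl fun v _ => ?_
        rw [show (16 : ℝ) * n = (4 * √n) * (4 * √n) by linear_combination (-16) * hsq]
        field_simp
      rw [this, div_le_iff₀ (by positivity)]
      have := (le_abs_self _).trans (h z w hz hw)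
      linarith
    have h2 : inner ℝ (y - y') (T x) ≤ 1 / 4 * ‖T‖ := by
      calc _ ≤ ‖y - y'‖ * ‖T x‖ := real_inner_le_norm _ _
        _ ≤ 1 / 4 * ‖T‖ := by
          have := T.le_opNorm x
          rw [hx, mul_one] at this
          gcongr
    have h3 : inner ℝ y' (T (x - x')) ≤ ‖T‖ * (1 / 4) := by
      calc _ ≤ ‖y'‖ * ‖T (x - x')‖ := real_inner_le_norm _ _
        _ ≤ 1 * (‖T‖ * (1 / 4)) := by
          have := T.le_opNorm (x - x')
          gcongr
          exact this.trans (by gcongr)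
        _ = _ := one_mul _
    linarith
  have hbound (x : EuclideanSpace ℝ (Fin n)) (hx : ‖x‖ = 1) : ‖T x‖ ≤ b / 16 + ‖T‖ / 2 := by
    by_cases h0 : ‖T x‖ = 0
    · rw [h0]; positivity
    have := hunit x (‖T x‖⁻¹ • T x) hx (by rw [norm_smul, norm_inv, norm_norm, inv_mul_cancel₀ h0])
    rw [real_inner_smul_left, real_inner_self_eq_norm_sq] at this
    calc ‖T x‖ = ‖T x‖⁻¹ * ‖T x‖ ^ 2 := by field_simp
      _ ≤ _ := this
  have hN : ‖T‖ ≤ b / 8 := by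
    have : ‖T‖ ≤ b / 16 + ‖T‖ / 2 :=
      T.opNorm_le_of_unit_norm (by positivity) hbound
    linarith
  refine Real.sSup_le ?_ (by positivity)
  rintro t ⟨x, hx, rfl⟩
  rw [sqnorm_eq_norm] at hx ⊢
  rw [← hTapp]
  have := T.le_opNorm (WithLp.toLp 2 x)
  rw [hx, mul_one] at this
  exact this.trans hN

lemma sum_weight_mul_prod {n : ℕ} (P : Matrix (Fin n) (Fin n) ℝ) (g : Fin n → Fin n → Bool → ℝ) :
    ∑ A : Adj n, weight P A * ∏ u, ∏ v, (if u < v then g u v (A u v) else 1) =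
      ∏ u, ∏ v, (if u < v then P u v * g u v true + (1 - P u v) * g u v false else 1) := by
  classical
  set h : Fin n → Fin n → Bool → ℝ := fun u v b =>
    if u < v then (if b then P u v else 1 - P u v) * g u v b else (if b then 0 else 1) with hh
  have hR : ∏ u, ∏ v, (if u < v then P u v * g u v true + (1 - P u v) * g u v false else 1) =
      ∑ B : Adj n, ∏ u, ∏ v, h u v (B u v) := by
    have h1 (u : Fin n) : ∏ v, (if u < v then P u v * g u v true + (1 - P u v) * g u v false else 1)
        = ∑ r : Fin n → Bool, ∏ v, h u v (r v) := by
      rw [← Fintype.prod_sum]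
      refine Finset.prod_congr rfl fun v _ => ?_
      by_cases huv : u < v <;> simp [hh, huv]
    simp_rw [h1]
    exact Fintype.prod_sum _
  rw [hR]
  have hL : ∑ A : Adj n, weight P A * ∏ u, ∏ v, (if u < v then g u v (A u v) else 1) =
      ∑ A ∈ Finset.univ.filter (fun A : Adj n => (∀ u, A u u = false) ∧ ∀ u v, A u v = A v u),
        weight P A * ∏ u, ∏ v, (if u < v then g u v (A u v) else 1) := by
    symm
    refine Finset.sum_filter_of_ne fun A _ hA => ?_
    by_contra hcon
    exact hA (by rw [weight, if_neg hcon, zero_mul])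
  have hR' : ∑ B : Adj n, ∏ u, ∏ v, h u v (B u v) =
      ∑ B ∈ Finset.univ.filter (fun B : Adj n => ∀ u v, ¬ u < v → B u v = false),
        ∏ u, ∏ v, h u v (B u v) := by
    symm
    refine Finset.sum_filter_of_ne fun B _ hB => ?_
    by_contra! hcon
    obtain ⟨u, v, huv, hne⟩ := hcon
    exact hB (Finset.prod_eq_zero (Finset.mem_univ u) (Finset.prod_eq_zero (Finset.mem_univ v)
      (by simp [hh, not_lt.2 huv, hne])))
  rw [hL, hR']
  refine Finset.sum_nbij' (fun A u v => decide (u < v) && A u v) (fun B u v => B u v || B v u)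
    ?_ ?_ ?_ ?_ ?_
  · intro A _
    simp only [Finset.mem_filter, Finset.mem_univ, true_and]
    intro u v huv
    simp [huv]
  · intro B hB
    simp only [Finset.mem_filter, Finset.mem_univ, true_and] at hB ⊢
    exact ⟨fun u => by simp [hB u u], fun u v => Bool.or_comm _ _⟩
  · intro A hA
    simp only [Finset.mem_filter, Finset.mem_univ, true_and] at hA
    funext u v
    rcases lt_trichotomy u v with huv | rfl | huv
    · simp [huv, huv.not_gt]
    · simp [hA.1]
    · simp [huv, huv.not_gt, hA.2 u v]
  · intro B hB
    simp only [Finset.mem_filter, Finset.mem_univ, true_and] at hB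
    funext u v
    by_cases huv : u < v
    · simp [huv, hB v u huv.not_gt]
    · simp [huv, hB u v huv]
  · intro A hA
    simp only [Finset.mem_filter, Finset.mem_univ, true_and] at hA
    rw [weight, if_pos hA, ← Finset.prod_mul_distrib]
    refine Finset.prod_congr rfl fun u _ => ?_
    rw [← Finset.prod_mul_distrib]
    refine Finset.prod_congr rfl fun v _ => ?_
    by_cases huv : u < v <;> simp [hh, huv]

section Probability

variable {n : ℕ} {P : Matrix (Fin n) (Fin n) ℝ}

lemma weight_nonneg (hP : ∀ u v, 0 ≤ P u v ∧ P u v ≤ 1) (A : Adj n) : 0 ≤ weight P A := by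
  rw [weight]
  split_ifs
  · refine Finset.prod_nonneg fun u _ => Finset.prod_nonneg fun v _ => ?_
    have := hP u v
    split_ifs <;> linarith
  · exact le_rfl

lemma sum_weight : ∑ A : Adj n, weight P A = 1 := by
  have := sum_weight_mul_prod P (fun _ _ _ => 1)
  simpa using this

lemma prob_mono (hP : ∀ u v, 0 ≤ P u v ∧ P u v ≤ 1) {S T : Set (Adj n)}
    (h : ∀ A, (∀ u, A u u = false) → (∀ u v, A u v = A v u) → A ∈ S → A ∈ T) :
    prob P S ≤ prob P T := by
  classical
  refine Finset.sum_le_sum fun A _ => ?_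
  by_cases hA : (∀ u, A u u = false) ∧ ∀ u v, A u v = A v u
  · by_cases hS : A ∈ S
    · rw [Set.indicator_of_mem hS, Set.indicator_of_mem (h A hA.1 hA.2 hS)]
    · rw [Set.indicator_of_notMem hS]
      exact Set.indicator_nonneg (fun A _ => weight_nonneg hP A) A
  · have : weight P A = 0 := by rw [weight, if_neg hA]
    simp [Set.indicator_apply, this]

lemma prob_union_le (hP : ∀ u v, 0 ≤ P u v ∧ P u v ≤ 1) (S T : Set (Adj n)) :
    prob P (S ∪ T) ≤ prob P S + prob P T := by
  classical
  rw [prob, prob, prob, ← Finset.sum_add_distrib]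
  refine Finset.sum_le_sum fun A _ => ?_
  have := weight_nonneg hP A
  by_cases hS : A ∈ S <;> by_cases hT : A ∈ T <;> simp [hS, hT, this]

lemma prob_exists_le (hP : ∀ u v, 0 ≤ P u v ∧ P u v ≤ 1) {ι : Type*} (I : Finset ι)
    (E : ι → Set (Adj n)) :
    prob P {A | ∃ i ∈ I, A ∈ E i} ≤ ∑ i ∈ I, prob P (E i) := by
  classical
  induction I using Finset.induction_on with
  | empty => simp [prob]
  | insert a I ha ih =>
    rw [Finset.sum_insert ha]
    have : {A | ∃ i ∈ insert a I, A ∈ E i} = E a ∪ {A | ∃ i ∈ I, A ∈ E i} := by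
      ext A; simp
    rw [this]
    exact (prob_union_le hP _ _).trans (by gcongr)

lemma one_sub_prob_compl (S : Set (Adj n)) : 1 - prob P Sᶜ = prob P S := by
  have : prob P S + prob P Sᶜ = 1 := by
    rw [prob, prob, ← Finset.sum_add_distrib, ← sum_weight (P := P)]
    exact Finset.sum_congr rfl fun A _ => congrFun (Set.indicator_self_add_compl S (weight P)) A
  linarith

/-- Chernoff bound for a linear statistic of the entries above the diagonal. -/
lemma prob_linear_gt_le (hP : ∀ u v, 0 ≤ P u v ∧ P u v ≤ 1) (c : Fin n → Fin n → ℝ) (t : ℝ) :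
    prob P {A | t < ∑ u, ∑ v, if u < v then c u v * aVal A u v else 0} ≤
      Real.exp (-t + ∑ u, ∑ v, if u < v then P u v * (Real.exp (c u v) - 1) else 0) := by
  classical
  have hmgf := sum_weight_mul_prod P (fun u v b => Real.exp (c u v * if b then 1 else 0))
  have hexp (A : Adj n) : ∏ u, ∏ v, (if u < v then Real.exp (c u v * if A u v then 1 else 0) else 1)
      = Real.exp (∑ u, ∑ v, if u < v then c u v * aVal A u v else 0) := by
    simp_rw [Real.exp_sum]
    refine Finset.prod_congr rfl fun u _ => Finset.prod_congr rfl fun v _ => ?_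
    split_ifs <;> simp_all [aVal]
  simp_rw [hexp] at hmgf
  calc prob P {A | t < ∑ u, ∑ v, if u < v then c u v * aVal A u v else 0}
      ≤ ∑ A : Adj n, Real.exp (-t) * (weight P A *
          Real.exp (∑ u, ∑ v, if u < v then c u v * aVal A u v else 0)) := by
        refine Finset.sum_le_sum fun A _ => ?_
        have hw := weight_nonneg hP A
        rw [Set.indicator_apply]
        split_ifs with hA
        · rw [mul_left_comm, ← Real.exp_add]
          refine le_mul_of_one_le_right hw (Real.one_le_exp ?_)
          have : t < ∑ u, ∑ v, if u < v then c u v * aVal A u v else 0 := hA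
          linarith
        · positivity
    _ = Real.exp (-t) * ∏ u, ∏ v,
          (if u < v then P u v * Real.exp (c u v) + (1 - P u v) else 1) := by
        rw [← Finset.mul_sum, hmgf]; simp
    _ ≤ Real.exp (-t) * ∏ u, ∏ v,
          Real.exp (if u < v then P u v * (Real.exp (c u v) - 1) else 0) := by
        have hnn (u v : Fin n) :
            0 ≤ (if u < v then P u v * Real.exp (c u v) + (1 - P u v) else 1) := by
          have h1 := (hP u v).1
          have h2 := sub_nonneg.2 (hP u v).2
          split_ifs <;> positivity
        refine mul_le_mul_of_nonneg_left (Finset.prod_le_prod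
          (fun u _ => Finset.prod_nonneg fun v _ => hnn u v) fun u _ =>
          Finset.prod_le_prod (fun v _ => hnn u v) fun v _ => ?_) (Real.exp_pos _).le
        split_ifs
        · have := Real.add_one_le_exp (P u v * (Real.exp (c u v) - 1))
          linarith
        · simp
    _ = _ := by
        simp_rw [Real.exp_add, Real.exp_sum]

end Probability

/-- Integer vectors of squared Euclidean norm at most `16 n`. -/
noncomputable def latticeBall (n : ℕ) : Finset (Fin n → ℤ) :=
  (Fintype.piFinset fun _ => Finset.Icc (-(16 * n : ℤ)) (16 * n)).filter
    fun z => ∑ u, (z u : ℝ) ^ 2 ≤ 16 * n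

lemma mem_latticeBall {n : ℕ} {z : Fin n → ℤ} :
    z ∈ latticeBall n ↔ ∑ u, (z u : ℝ) ^ 2 ≤ 16 * n := by
  simp only [latticeBall, Finset.mem_filter, Fintype.mem_piFinset, Finset.mem_Icc,
    and_iff_right_iff_imp]
  intro h u
  have h1 : (z u : ℝ) ^ 2 ≤ 16 * n :=
    (Finset.single_le_sum (f := fun u => (z u : ℝ) ^ 2) (fun _ _ => sq_nonneg _)
      (Finset.mem_univ u)).trans h
  have h2 : z u ^ 2 ≤ 16 * n := by exact_mod_cast h1
  have h3 := Int.le_self_sq (z u)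
  have h4 := Int.le_self_sq (-z u)
  rw [neg_sq] at h4
  constructor <;> linarith

lemma sum_half_pow_natAbs (N : ℕ) :
    ∑ z ∈ Finset.Icc (-(N : ℤ)) N, (1 / 2 : ℝ) ^ z.natAbs = 3 - 2 * (1 / 2) ^ N := by
  induction N with
  | zero => norm_num
  | succ N ih =>
    have hI : Finset.Icc (-((N + 1 : ℕ) : ℤ)) (N + 1 : ℕ) =
        insert ((N + 1 : ℕ) : ℤ) (insert (-((N + 1 : ℕ) : ℤ)) (Finset.Icc (-(N : ℤ)) N)) := by
      ext z
      simp only [Finset.mem_insert, Finset.mem_Icc]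
      lia
    rw [hI, Finset.sum_insert, Finset.sum_insert, ih, Int.natAbs_neg, Int.natAbs_natCast, pow_succ]
    · ring
    · simp
    · simp only [Finset.mem_insert, Finset.mem_Icc]
      lia

lemma card_latticeBall_le (n : ℕ) : ((latticeBall n).card : ℝ) ≤ Real.exp (18 * n) := by
  have hsq (z : ℤ) : Real.exp (-(z : ℝ) ^ 2) ≤ (1 / 2 : ℝ) ^ z.natAbs := by
    have h1 : (z.natAbs : ℝ) ≤ (z : ℝ) ^ 2 := by
      rw [Nat.cast_natAbs]
      exact_mod_cast Int.natAbs_le_self_sq z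
    have h2 : Real.exp (-1) ≤ 1 / 2 := by
      rw [Real.exp_neg, one_div]
      exact inv_anti₀ (by norm_num) (by linarith [Real.exp_one_gt_d9])
    calc _ ≤ Real.exp (z.natAbs * (-1)) := Real.exp_le_exp.2 (by linarith)
      _ = Real.exp (-1) ^ z.natAbs := Real.exp_nat_mul _ _
      _ ≤ _ := by gcongr
  have hexp2 : (3 : ℝ) ≤ Real.exp 2 := by linarith [Real.add_one_le_exp (2 : ℝ)]
  calc ((latticeBall n).card : ℝ) = ∑ z ∈ latticeBall n, 1 := by simp
    _ ≤ ∑ z ∈ latticeBall n, Real.exp (16 * n) * ∏ u, Real.exp (-(z u : ℝ) ^ 2) := by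
        refine Finset.sum_le_sum fun z hz => ?_
        rw [← Real.exp_sum, ← Real.exp_add, Finset.sum_neg_distrib]
        exact Real.one_le_exp (by linarith [mem_latticeBall.1 hz])
    _ ≤ ∑ z ∈ Fintype.piFinset (fun _ : Fin n => Finset.Icc (-(16 * n : ℤ)) (16 * n)),
          Real.exp (16 * n) * ∏ u, Real.exp (-(z u : ℝ) ^ 2) :=
        Finset.sum_le_sum_of_subset_of_nonneg (Finset.filter_subset _ _)
          fun _ _ _ => by positivity
    _ = Real.exp (16 * n) *
          ∏ _u : Fin n, ∑ z ∈ Finset.Icc (-(16 * n : ℤ)) (16 * n), Real.exp (-(z : ℝ) ^ 2) := by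
        rw [← Finset.mul_sum, Finset.prod_univ_sum]
    _ ≤ Real.exp (16 * n) * ∏ _u : Fin n, Real.exp 2 := by
        gcongr with u
        calc _ ≤ ∑ z ∈ Finset.Icc (-(16 * n : ℤ)) (16 * n), (1 / 2 : ℝ) ^ z.natAbs :=
              Finset.sum_le_sum fun z _ => hsq z
          _ = 3 - 2 * (1 / 2) ^ (16 * n) := by
              exact_mod_cast sum_half_pow_natAbs (16 * n)
          _ ≤ Real.exp 2 := by
              have : (0 : ℝ) ≤ (1 / 2) ^ (16 * n) := by positivity
              linarith
    _ = Real.exp (18 * n) := by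
        rw [Finset.prod_const, Finset.card_univ, Fintype.card_fin, ← Real.exp_nat_mul,
          ← Real.exp_add]
        ring_nf

/-- The part of the rank-one form `z wᵀ` with entries of absolute value at most `16 D`. -/
noncomputable def lightPart {n : ℕ} (D : ℝ) (z w : Fin n → ℤ) (u v : Fin n) : ℝ :=
  if |(z u : ℝ) * w v| ≤ 16 * D then (z u : ℝ) * w v else 0

lemma lightPart_neg_left {n : ℕ} (D : ℝ) (z w : Fin n → ℤ) (u v : Fin n) :
    lightPart D (-z) w u v = -lightPart D z w u v := by
  simp only [lightPart, Pi.neg_apply, Int.cast_neg, neg_mul, abs_neg]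
  split_ifs <;> simp

lemma prob_light_gt_le {n : ℕ} {P : Matrix (Fin n) (Fin n) ℝ}
    (hP : ∀ u v, 0 ≤ P u v ∧ P u v ≤ 1) (hn : 0 < n) {D : ℝ} (hD : 0 < D)
    (hPD : ∀ u v, P u v ≤ D ^ 2 / n) (z w : Fin n → ℤ)
    (hz : ∑ u, (z u : ℝ) ^ 2 ≤ 16 * n) (hw : ∑ u, (w u : ℝ) ^ 2 ≤ 16 * n) (κ : ℝ) :
    prob P {A | 16 * D * (κ * n) <
        ∑ u, ∑ v, if u < v then (aVal A u v - P u v) * lightPart D z w u v else 0} ≤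
      Real.exp (n - κ * n) := by
  have hn' : (0 : ℝ) < n := by exact_mod_cast hn
  set c : Fin n → Fin n → ℝ := fun u v => lightPart D z w u v / (16 * D) with hc
  have hc1 (u v : Fin n) : |c u v| ≤ 1 := by
    rw [hc, abs_div, abs_of_pos (by positivity : (0 : ℝ) < 16 * D), div_le_one (by positivity),
      lightPart]
    split_ifs with h
    · exact h
    · simp; positivity
  have hc2 (u v : Fin n) : c u v ^ 2 ≤ (z u : ℝ) ^ 2 * (w v : ℝ) ^ 2 / (256 * D ^ 2) := by
    rw [hc, div_pow, mul_pow, show (16 : ℝ) ^ 2 = 256 by norm_num, lightPart]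
    gcongr
    split_ifs
    · rw [mul_pow]
    · rw [zero_pow two_ne_zero]
      positivity
  have hvar : ∑ u, ∑ v, (if u < v then P u v * c u v ^ 2 else 0) ≤ n := by
    calc _ ≤ ∑ u, ∑ v, D ^ 2 / n * ((z u : ℝ) ^ 2 * (w v : ℝ) ^ 2 / (256 * D ^ 2)) := by
          refine Finset.sum_le_sum fun u _ => Finset.sum_le_sum fun v _ => ?_
          split_ifs
          · exact mul_le_mul (hPD u v) (hc2 u v) (sq_nonneg _) (by positivity)
          · positivity
      _ = ((∑ u, (z u : ℝ) ^ 2) * ∑ v, (w v : ℝ) ^ 2) / (256 * n) := by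
          rw [Finset.sum_mul_sum, Finset.sum_div]
          refine Finset.sum_congr rfl fun u _ => ?_
          rw [Finset.sum_div]
          refine Finset.sum_congr rfl fun v _ => ?_
          field_simp
      _ ≤ (16 * n) * (16 * n) / (256 * n) := by gcongr
      _ = n := by field_simp; norm_num
  refine (prob_mono hP (T := {A | κ * n + ∑ u, ∑ v, (if u < v then P u v * c u v else 0) <
    ∑ u, ∑ v, if u < v then c u v * aVal A u v else 0}) ?_).trans
    ((prob_linear_gt_le hP c _).trans (Real.exp_le_exp.2 ?_))
  · intro A _ _ hA
    simp only [Set.mem_ofPred_eq] at hA ⊢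
    rw [← lt_sub_iff_add_lt, ← Finset.sum_sub_distrib]
    rw [← lt_div_iff₀' (by positivity), Finset.sum_div] at hA
    refine hA.trans_eq (Finset.sum_congr rfl fun u _ => ?_)
    rw [← Finset.sum_sub_distrib, Finset.sum_div]
    refine Finset.sum_congr rfl fun v _ => ?_
    simp only [hc]
    split_ifs <;> ring
  · have : ∑ u, ∑ v, (if u < v then P u v * (Real.exp (c u v) - 1) else 0) ≤
        ∑ u, ∑ v, ((if u < v then P u v * c u v else 0) +
          (if u < v then P u v * c u v ^ 2 else 0)) := by
      refine Finset.sum_le_sum fun u _ => Finset.sum_le_sum fun v _ => ?_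
      split_ifs
      · rw [← mul_add]
        refine mul_le_mul_of_nonneg_left ?_ (hP u v).1
        linarith [le_of_abs_le (Real.abs_exp_sub_one_sub_id_le (hc1 u v))]
      · simp
    simp_rw [Finset.sum_add_distrib] at this
    linarith

/-- All light forms over the lattice ball concentrate simultaneously. -/
lemma prob_exists_light_gt_le {n : ℕ} {P : Matrix (Fin n) (Fin n) ℝ}
    (hP : ∀ u v, 0 ≤ P u v ∧ P u v ≤ 1) (hn : 0 < n) {D : ℝ} (hD : 0 < D)
    (hPD : ∀ u v, P u v ≤ D ^ 2 / n) (κ : ℝ) :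
    prob P {A | ∃ q ∈ latticeBall n ×ˢ latticeBall n, A ∈ {A | 16 * D * (κ * n) <
        ∑ u, ∑ v, if u < v then (aVal A u v - P u v) * lightPart D q.1 q.2 u v else 0}} ≤
      Real.exp (37 * n - κ * n) := by
  refine (prob_exists_le hP _ _).trans ?_
  calc _ ≤ ∑ _q ∈ latticeBall n ×ˢ latticeBall n, Real.exp (n - κ * n) := by
        refine Finset.sum_le_sum fun q hq => ?_
        rw [Finset.mem_product, mem_latticeBall, mem_latticeBall] at hq
        exact prob_light_gt_le hP hn hD hPD q.1 q.2 hq.1 hq.2 κ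
    _ = (latticeBall n).card * (latticeBall n).card * Real.exp (n - κ * n) := by
        rw [Finset.sum_const, Finset.card_product, nsmul_eq_mul, Nat.cast_mul]
    _ ≤ Real.exp (18 * n) * Real.exp (18 * n) * Real.exp (n - κ * n) := by
        gcongr <;> exact card_latticeBall_le n
    _ = _ := by
        rw [← Real.exp_add, ← Real.exp_add]
        ring_nf

lemma choose_le_exp_entropyBound {n s : ℕ} (hn : 0 < n) (hs : 0 < s) :
    (n.choose s : ℝ) ≤ Real.exp (entropyBound n s) := by
  have hn' : (0 : ℝ) < n := by exact_mod_cast hn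
  have hs' : (0 : ℝ) < s := by exact_mod_cast hs
  calc (n.choose s : ℝ) ≤ (n : ℝ) ^ s / s.factorial := Nat.choose_le_pow_div s n
    _ = (n / s : ℝ) ^ s * ((s : ℝ) ^ s / s.factorial) := by
        rw [div_pow]; field_simp
    _ ≤ (n / s : ℝ) ^ s * Real.exp s := by
        gcongr
        exact Real.pow_div_factorial_le_exp _ hs'.le s
    _ = Real.exp (entropyBound n s) := by
        rw [entropyBound, mul_add, mul_one, Real.exp_add, Real.exp_nat_mul,
          Real.exp_log (by positivity), mul_comm]

lemma one_add_log_le_entropyBound {n s : ℕ} (hs : 0 < s) (hsn : s ≤ n) :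
    1 + Real.log n ≤ entropyBound n s := by
  have hs' : (1 : ℝ) ≤ s := by exact_mod_cast hs
  have hsn' : (s : ℝ) ≤ n := by exact_mod_cast hsn
  have h1 := Real.log_le_sub_one_of_pos (by linarith : (0 : ℝ) < s)
  have h2 := Real.log_le_log (by linarith) hsn'
  rw [entropyBound, Real.log_div (by linarith) (by linarith)]
  nlinarith [mul_le_mul_of_nonneg_left h2 (by linarith : (0 : ℝ) ≤ s - 1)]

lemma sum_exp_neg_entropyBound_le {n : ℕ} (hn : 0 < n) {c : ℝ} (hc : 1 ≤ c) :
    ∑ S ∈ (Finset.univ : Finset (Finset (Fin n))).filter Finset.Nonempty,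
      Real.exp (-(c * entropyBound n S.card)) ≤ Real.exp (-((c - 2) * (1 + Real.log n))) := by
  have hn' : (0 : ℝ) < n := by exact_mod_cast hn
  have hsum := Finset.sum_powerset_apply_card
    (fun s : ℕ => if s = 0 then 0 else Real.exp (-(c * entropyBound n s)))
    (x := (Finset.univ : Finset (Fin n)))
  rw [Finset.powerset_univ, Finset.card_univ, Fintype.card_fin, Finset.sum_range_succ'] at hsum
  calc _ = ∑ S : Finset (Fin n),
        (if S.card = 0 then 0 else Real.exp (-(c * entropyBound n S.card))) := by
        rw [Finset.sum_filter]
        refine Finset.sum_congr rfl fun S _ => ?_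
        simp only [Finset.card_eq_zero, Finset.nonempty_iff_ne_empty]
        split_ifs <;> simp_all
    _ = ∑ s ∈ Finset.range n, (n.choose (s + 1) : ℝ) *
          Real.exp (-(c * entropyBound n (s + 1 : ℕ))) := by
        rw [hsum]
        simp
    _ ≤ ∑ s ∈ Finset.range n, Real.exp (-((c - 1) * (1 + Real.log n))) := by
        refine Finset.sum_le_sum fun s hs => ?_
        have hsn : s + 1 ≤ n := Finset.mem_range.1 hs
        have h1 := one_add_log_le_entropyBound s.succ_pos hsn
        calc _ ≤ Real.exp (entropyBound n (s + 1 : ℕ)) *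
              Real.exp (-(c * entropyBound n (s + 1 : ℕ))) := by
              gcongr
              exact choose_le_exp_entropyBound hn s.succ_pos
          _ ≤ _ := by
              rw [← Real.exp_add, Real.exp_le_exp]
              nlinarith [mul_le_mul_of_nonneg_left h1 (sub_nonneg.2 hc)]
    _ = n * Real.exp (-((c - 1) * (1 + Real.log n))) := by simp
    _ ≤ Real.exp (1 + Real.log n) * Real.exp (-((c - 1) * (1 + Real.log n))) := by
        gcongr
        rw [Real.exp_add, Real.exp_log hn']
        exact le_mul_of_one_le_left hn'.le (Real.one_le_exp zero_le_one)
    _ = _ := by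
        rw [← Real.exp_add]
        ring_nf

lemma sum_sum_ite_mem {n : ℕ} (S T : Finset (Fin n)) (f : Fin n → Fin n → ℝ) :
    ∑ u, ∑ v, (if u ∈ S ∧ v ∈ T then f u v else 0) = ∑ u ∈ S, ∑ v ∈ T, f u v := by
  rw [← Finset.sum_subset (Finset.subset_univ S)]
  · refine Finset.sum_congr rfl fun u hu => ?_
    simp [hu]
  · intro u _ hu
    simp [hu]

/-- The upper tail of the number of edges between two vertex sets. -/
lemma prob_edges_gt_le {n : ℕ} {P : Matrix (Fin n) (Fin n) ℝ}
    (hP : ∀ u v, 0 ≤ P u v ∧ P u v ≤ 1) {q : ℝ} (hPq : ∀ u v, P u v ≤ q)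
    (S T : Finset (Fin n)) {x : ℝ} (hx : 1 ≤ x) (r : ℝ) :
    prob P {A | Real.exp 1 * x * (q * S.card * T.card) + r <
        (1 + Real.log x) * ∑ u ∈ S, ∑ v ∈ T, if u < v then aVal A u v else 0} ≤
      Real.exp (-r) := by
  have hlog := Real.log_nonneg hx
  refine (prob_mono hP ?_).trans ((prob_linear_gt_le hP
    (fun u v => if u ∈ S ∧ v ∈ T then 1 + Real.log x else 0)
    (Real.exp 1 * x * (q * S.card * T.card) + r)).trans (Real.exp_le_exp.2 ?_))
  · intro A _ _ hA
    simp only [Set.mem_ofPred_eq] at hA ⊢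
    refine hA.trans_eq ?_
    rw [← sum_sum_ite_mem S T, Finset.mul_sum]
    refine Finset.sum_congr rfl fun u _ => ?_
    rw [Finset.mul_sum]
    refine Finset.sum_congr rfl fun v _ => ?_
    split_ifs <;> simp
  · have : ∑ u, ∑ v, (if u < v then P u v *
        (Real.exp (if u ∈ S ∧ v ∈ T then 1 + Real.log x else 0) - 1) else 0) ≤
        ∑ u ∈ S, ∑ v ∈ T, q * (Real.exp 1 * x) := by
      rw [← sum_sum_ite_mem S T]
      refine Finset.sum_le_sum fun u _ => Finset.sum_le_sum fun v _ => ?_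
      have hq : 0 ≤ q := (hP u v).1.trans (hPq u v)
      by_cases hST : u ∈ S ∧ v ∈ T
      · simp only [if_pos hST]
        split_ifs
        · rw [Real.exp_add, Real.exp_log (by linarith)]
          have hex : 1 ≤ Real.exp 1 * x := one_le_mul_of_one_le_of_one_le
            (Real.one_le_exp zero_le_one) hx
          exact mul_le_mul (hPq u v) (by linarith) (by linarith) hq
        · positivity
      · simp [hST]
    rw [Finset.sum_const, Finset.sum_const, nsmul_eq_mul, nsmul_eq_mul] at this
    linarith

/-- All pairs of vertex sets satisfy the discrepancy inequality simultaneously. -/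
lemma prob_exists_discrepancy_le {n : ℕ} {P : Matrix (Fin n) (Fin n) ℝ}
    (hP : ∀ u v, 0 ≤ P u v ∧ P u v ≤ 1) (hn : 0 < n) {D : ℝ} (hD : 0 < D)
    (hPD : ∀ u v, P u v ≤ D ^ 2 / n) {c : ℝ} (hc : 1 ≤ c) :
    prob P {A | ∃ q ∈ ((Finset.univ : Finset (Finset (Fin n))).filter Finset.Nonempty ×ˢ
          (Finset.univ : Finset (Finset (Fin n))).filter Finset.Nonempty) ×ˢ
          (Finset.range (32 * n + 2)).filter (fun l => D ≤ 2 ^ l), A ∈ {A |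
        Real.exp 1 * (2 ^ q.2 / D) * (D ^ 2 / n * q.1.1.card * q.1.2.card) +
          c * (entropyBound n q.1.1.card + entropyBound n q.1.2.card) <
        (1 + Real.log (2 ^ q.2 / D)) *
          ∑ u ∈ q.1.1, ∑ v ∈ q.1.2, if u < v then aVal A u v else 0}} ≤
      Real.exp (-((2 * c - 9) * (1 + Real.log n))) := by
  have hn1 : (1 : ℝ) ≤ n := by exact_mod_cast hn
  refine (prob_exists_le hP _ _).trans ?_
  set I := (Finset.univ : Finset (Finset (Fin n))).filter Finset.Nonempty
  set R := (Finset.range (32 * n + 2)).filter (fun l => D ≤ 2 ^ l)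
  have hR : (R.card : ℝ) ≤ Real.exp (5 * (1 + Real.log n)) := by
    have h1 : R.card ≤ 32 * n + 2 := (Finset.card_filter_le _ _).trans (by simp)
    have h2 : (R.card : ℝ) ≤ 32 * n + 2 := by exact_mod_cast h1
    have h3 : (34 : ℝ) ≤ Real.exp 5 := by
      have : (34 : ℝ) ≤ Real.exp 1 ^ 5 := by
        calc (34 : ℝ) ≤ 2.1 ^ 5 := by norm_num
          _ ≤ _ := by gcongr; linarith [Real.exp_one_gt_d9]
      rwa [← Real.exp_nat_mul, Nat.cast_ofNat, mul_one] at this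
    have hlog := Real.log_nonneg hn1
    calc (R.card : ℝ) ≤ 34 * n := by linarith
      _ ≤ Real.exp 5 * n := by gcongr
      _ = Real.exp (5 + Real.log n) := by rw [Real.exp_add, Real.exp_log (by linarith)]
      _ ≤ _ := Real.exp_le_exp.2 (by linarith)
  calc _ ≤ ∑ q ∈ (I ×ˢ I) ×ˢ R, Real.exp (-(c * entropyBound n q.1.1.card)) *
        Real.exp (-(c * entropyBound n q.1.2.card)) * 1 := by
        refine Finset.sum_le_sum fun q hq => ?_
        have hq2 : D ≤ 2 ^ q.2 := (Finset.mem_filter.1 (Finset.mem_product.1 hq).2).2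
        refine (prob_edges_gt_le hP hPD q.1.1 q.1.2 ((one_le_div hD).2 hq2) _).trans_eq ?_
        rw [← Real.exp_add]
        ring_nf
    _ = (∑ S ∈ I, Real.exp (-(c * entropyBound n S.card))) *
          (∑ S ∈ I, Real.exp (-(c * entropyBound n S.card))) * R.card := by
        rw [Finset.sum_mul_sum, ← Finset.sum_product', Finset.sum_product, Finset.sum_mul]
        simp [mul_comm]
    _ ≤ Real.exp (-((c - 2) * (1 + Real.log n))) * Real.exp (-((c - 2) * (1 + Real.log n))) *
          Real.exp (5 * (1 + Real.log n)) := by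
        gcongr <;> exact sum_exp_neg_entropyBound_le hn hc
    _ = _ := by
        rw [← Real.exp_add, ← Real.exp_add]
        ring_nf

lemma sum_sum_eq_upper_add_lower_add_diag {n : ℕ} (g : Fin n → Fin n → ℝ) :
    ∑ u, ∑ v, g u v = ∑ u, ∑ v, (if u < v then g u v else 0) +
      ∑ u, ∑ v, (if u < v then g v u else 0) + ∑ u, g u u := by
  have h (u v : Fin n) : g u v = (if u < v then g u v else 0) + (if v < u then g u v else 0) +
      (if u = v then g u v else 0) := by
    rcases lt_trichotomy u v with h | rfl | h
    · simp [h, h.ne, h.not_gt]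
    · simp
    · simp [h, h.ne', h.not_gt]
  calc ∑ u, ∑ v, g u v = ∑ u, ∑ v, ((if u < v then g u v else 0) + (if v < u then g u v else 0) +
        (if u = v then g u v else 0)) :=
        Finset.sum_congr rfl fun u _ => Finset.sum_congr rfl fun v _ => h u v
    _ = _ := by
        simp only [Finset.sum_add_distrib, Finset.sum_ite_eq, Finset.mem_univ, if_true]
        rw [Finset.sum_comm (f := fun u v => if v < u then g u v else 0)]

lemma aVal_nonneg {n : ℕ} (A : Adj n) (u v : Fin n) : 0 ≤ aVal A u v := by
  rw [aVal]; split_ifs <;> norm_num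

/-- The form `∑_{u < v} (A - P)_{uv} z_u w_v` is of order `n D` for vectors supported on vertices of
degree at most `D ^ 2`, given concentration of light forms and the discrepancy inequality. -/
lemma abs_upper_form_le {n : ℕ} {P : Matrix (Fin n) (Fin n) ℝ}
    (hP : ∀ u v, 0 ≤ P u v ∧ P u v ≤ 1) (hn : 0 < n) {D : ℝ} (hD : 0 < D)
    (hPD : ∀ u v, P u v ≤ D ^ 2 / n) {c κ : ℝ} (hc : 0 ≤ c) {A : Adj n}
    (hA : ∀ u v, A u v = A v u) {J : Finset (Fin n)} (hJ : ∀ u ∈ J, degree A u ≤ D ^ 2)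
    (hlight : ∀ z w : Fin n → ℤ, ∑ u, (z u : ℝ) ^ 2 ≤ 16 * n → ∑ u, (w u : ℝ) ^ 2 ≤ 16 * n →
      ∑ u, ∑ v, (if u < v then (aVal A u v - P u v) * lightPart D z w u v else 0) ≤
        16 * D * (κ * n))
    (hdisc : ∀ S T : Finset (Fin n), S.Nonempty → T.Nonempty → ∀ l < 32 * n + 2,
      D ≤ 2 ^ l → (1 + Real.log (2 ^ l / D)) *
        ∑ u ∈ S, ∑ v ∈ T, (if u < v then aVal A u v else 0) ≤
        Real.exp 1 * (2 ^ l / D) * (D ^ 2 * S.card * T.card / n) +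
        c * (entropyBound n S.card + entropyBound n T.card))
    {z w : Fin n → ℤ} (hz : ∑ u, (z u : ℝ) ^ 2 ≤ 16 * n) (hw : ∑ u, (w u : ℝ) ^ 2 ≤ 16 * n)
    (hzJ : ∀ u, z u ≠ 0 → u ∈ J) (hwJ : ∀ u, w u ≠ 0 → u ∈ J) :
    |∑ u, ∑ v, (if u < v then (aVal A u v - P u v) * ((z u : ℝ) * w v) else 0)| ≤
      (16 * κ + 4 * (832 + 800 * c) + 16) * (n * D) := by
  have hn' : (0 : ℝ) < n := by exact_mod_cast hn
  set E : Fin n → Fin n → ℝ := fun u v => if u < v then aVal A u v else 0 with hE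
  set Q : Fin n → Fin n → ℝ := fun u v => if u < v then P u v else 0 with hQ
  set H : Fin n → Fin n → ℝ := fun u v =>
    if 16 * D < |(z u : ℝ) * w v| then (z u : ℝ) * w v else 0 with hH
  have hHabs (u v : Fin n) :
      |H u v| = if 16 * D < |(z u : ℝ) * w v| then |(z u : ℝ) * w v| else 0 := by
    simp only [hH]; split_ifs <;> simp
  have hE0 (u v : Fin n) : 0 ≤ E u v := by
    simp only [hE]; split_ifs
    exacts [aVal_nonneg A u v, le_rfl]
  have hQ0 (u v : Fin n) : 0 ≤ Q u v := by
    simp only [hQ]; split_ifs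
    exacts [(hP u v).1, le_rfl]
  have hQD (u v : Fin n) : Q u v ≤ D ^ 2 / n := by
    simp only [hQ]; split_ifs
    exacts [hPD u v, by positivity]
  have hEA (u v : Fin n) : E u v ≤ aVal A u v := by
    simp only [hE]; split_ifs
    exacts [le_rfl, aVal_nonneg A u v]
  have hsplit : ∑ u, ∑ v, (if u < v then (aVal A u v - P u v) * ((z u : ℝ) * w v) else 0) =
      ∑ u, ∑ v, (if u < v then (aVal A u v - P u v) * lightPart D z w u v else 0) +
      ∑ u, ∑ v, E u v * H u v - ∑ u, ∑ v, Q u v * H u v := by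
    simp only [← Finset.sum_add_distrib, ← Finset.sum_sub_distrib]
    refine Finset.sum_congr rfl fun u _ => Finset.sum_congr rfl fun v _ => ?_
    simp only [hE, hQ, hH, lightPart]
    by_cases huv : u < v
    · rcases le_or_gt |(z u : ℝ) * w v| (16 * D) with h | h
      · simp only [huv, h, h.not_gt, if_true, if_false]; ring
      · simp only [huv, h, h.not_ge, if_true, if_false]; ring
    · simp [huv]
  have hL : |∑ u, ∑ v, (if u < v then (aVal A u v - P u v) * lightPart D z w u v else 0)| ≤
      16 * D * (κ * n) := by
    refine abs_le.2 ⟨?_, hlight z w hz hw⟩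
    have := hlight (-z) w (by simpa using hz) hw
    simp only [lightPart_neg_left, mul_neg] at this
    have hneg : ∑ u, ∑ v,
        (if u < v then -((aVal A u v - P u v) * lightPart D z w u v) else 0) =
        -∑ u, ∑ v, (if u < v then (aVal A u v - P u v) * lightPart D z w u v else 0) := by
      simp only [← Finset.sum_neg_distrib]
      refine Finset.sum_congr rfl fun u _ => Finset.sum_congr rfl fun v _ => ?_
      split_ifs <;> simp
    linarith
  have hEH : |∑ u, ∑ v, E u v * H u v| ≤ 4 * ((832 + 800 * c) * (n * D)) := by
    refine le_trans ?_ (heavy_sum_le hn hc hD E hE0 J ?_ ?_ hdisc z w hz hw hzJ hwJ)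
    · refine (Finset.abs_sum_le_sum_abs _ _).trans (Finset.sum_le_sum fun u _ =>
        (Finset.abs_sum_le_sum_abs _ _).trans (Finset.sum_le_sum fun v _ => ?_))
      rw [abs_mul, abs_of_nonneg (hE0 u v), hHabs]
    · exact fun u hu => (Finset.sum_le_sum fun v _ => hEA u v).trans (hJ u hu)
    · refine fun v hv => (Finset.sum_le_sum fun u _ => ?_).trans (hJ v hv)
      exact (hEA u v).trans_eq (by rw [aVal, aVal, hA])
  have hQH : |∑ u, ∑ v, Q u v * H u v| ≤ 16 * (n * D) := by
    calc |∑ u, ∑ v, Q u v * H u v|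
        ≤ ∑ u, ∑ v, D ^ 2 / n * ((z u : ℝ) ^ 2 * (w v : ℝ) ^ 2 / (16 * D)) := by
          refine (Finset.abs_sum_le_sum_abs _ _).trans (Finset.sum_le_sum fun u _ =>
            (Finset.abs_sum_le_sum_abs _ _).trans (Finset.sum_le_sum fun v _ => ?_))
          rw [abs_mul, abs_of_nonneg (hQ0 u v), hHabs]
          refine mul_le_mul (hQD u v) ?_ (by split_ifs <;> positivity) (by positivity)
          split_ifs with h
          · rw [le_div_iff₀ (by positivity), ← mul_pow, ← sq_abs, sq]
            gcongr
          · positivity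
      _ = D * ((∑ u, (z u : ℝ) ^ 2) * ∑ v, (w v : ℝ) ^ 2) / (16 * n) := by
          rw [Finset.sum_mul_sum, Finset.mul_sum, Finset.sum_div]
          refine Finset.sum_congr rfl fun u _ => ?_
          rw [Finset.mul_sum, Finset.sum_div]
          refine Finset.sum_congr rfl fun v _ => ?_
          field_simp
      _ ≤ D * ((16 * n) * (16 * n)) / (16 * n) := by gcongr
      _ = 16 * (n * D) := by field_simp
  rw [abs_le] at hL hEH hQH
  rw [hsplit, abs_le]
  constructor <;> linarith

/-- The operator norm of the low-degree block of `A - P` is of order `D`, given concentration of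
light forms and the discrepancy inequality. -/
lemma opNorm_restrict_le {n : ℕ} {P : Matrix (Fin n) (Fin n) ℝ}
    (hP : ∀ u v, 0 ≤ P u v ∧ P u v ≤ 1) (hsymm : ∀ u v, P u v = P v u) (hn : 0 < n)
    {D : ℝ} (hD : 0 < D) (hPD : ∀ u v, P u v ≤ D ^ 2 / n) (hdiag : ∀ u, P u u ≤ D)
    {c κ : ℝ} (hc : 0 ≤ c) (hκ : 0 ≤ κ) {A : Adj n} (hA0 : ∀ u, A u u = false)
    (hA : ∀ u v, A u v = A v u) {J : Finset (Fin n)} (hJ : ∀ u ∈ J, degree A u ≤ D ^ 2)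
    (hlight : ∀ z w : Fin n → ℤ, ∑ u, (z u : ℝ) ^ 2 ≤ 16 * n → ∑ u, (w u : ℝ) ^ 2 ≤ 16 * n →
      ∑ u, ∑ v, (if u < v then (aVal A u v - P u v) * lightPart D z w u v else 0) ≤
        16 * D * (κ * n))
    (hdisc : ∀ S T : Finset (Fin n), S.Nonempty → T.Nonempty → ∀ l < 32 * n + 2,
      D ≤ 2 ^ l → (1 + Real.log (2 ^ l / D)) *
        ∑ u ∈ S, ∑ v ∈ T, (if u < v then aVal A u v else 0) ≤
        Real.exp 1 * (2 ^ l / D) * (D ^ 2 * S.card * T.card / n) +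
        c * (entropyBound n S.card + entropyBound n T.card)) :
    opNorm (restrictM (adjMat A - P) J) ≤ (4 * κ + (832 + 800 * c) + 6) * D := by
  have hb : (4 * κ + (832 + 800 * c) + 6) * D =
      ((2 * (16 * κ + 4 * (832 + 800 * c) + 16) + 16) * D) / 8 := by ring
  rw [hb]
  refine opNorm_le_of_lattice hn _ (by positivity) fun z w hz hw => ?_
  set z' : Fin n → ℤ := fun u => if u ∈ J then z u else 0 with hz'
  set w' : Fin n → ℤ := fun u => if u ∈ J then w u else 0 with hw'
  have hrestrict (x : Fin n → ℤ) (hx : ∑ u, (x u : ℝ) ^ 2 ≤ 16 * n) :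
      ∑ u, (((if u ∈ J then x u else 0 : ℤ) : ℤ) : ℝ) ^ 2 ≤ 16 * n := by
    refine (Finset.sum_le_sum fun u _ => ?_).trans hx
    split_ifs
    · exact le_rfl
    · simp; positivity
  have hz2 : ∑ u, (z' u : ℝ) ^ 2 ≤ 16 * n := hrestrict z hz
  have hw2 : ∑ u, (w' u : ℝ) ^ 2 ≤ 16 * n := hrestrict w hw
  have hsupp (x : Fin n → ℤ) (u : Fin n) (h : (if u ∈ J then x u else 0) ≠ 0) : u ∈ J := by
    by_contra hu
    simp [hu] at h
  have heq : ∑ u, ∑ v, restrictM (adjMat A - P) J u v * ((z u : ℝ) * w v) =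
      ∑ u, ∑ v, (aVal A u v - P u v) * ((z' u : ℝ) * w' v) := by
    refine Finset.sum_congr rfl fun u _ => Finset.sum_congr rfl fun v _ => ?_
    by_cases hu : u ∈ J <;> by_cases hv : v ∈ J <;>
      simp [restrictM, hz', hw', hu, hv, adjMat]
  have h1 := abs_upper_form_le hP hn hD hPD hc hA hJ hlight hdisc hz2 hw2 (hsupp z) (hsupp w)
  have h2 := abs_upper_form_le hP hn hD hPD hc hA hJ hlight hdisc hw2 hz2 (hsupp w) (hsupp z)
  have h21 : ∑ u, ∑ v, (if u < v then (aVal A v u - P v u) * ((z' v : ℝ) * w' u) else 0) =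
      ∑ u, ∑ v, (if u < v then (aVal A u v - P u v) * ((w' u : ℝ) * z' v) else 0) := by
    refine Finset.sum_congr rfl fun u _ => Finset.sum_congr rfl fun v _ => ?_
    rw [hsymm v u, aVal, hA v u, ← aVal, mul_comm (z' v : ℝ)]
  have h3 : |∑ u, (aVal A u u - P u u) * ((z' u : ℝ) * w' u)| ≤ 16 * (n * D) := by
    calc _ ≤ ∑ u, D * (((z' u : ℝ) ^ 2 + (w' u : ℝ) ^ 2) / 2) := by
          refine (Finset.abs_sum_le_sum_abs _ _).trans (Finset.sum_le_sum fun u _ => ?_)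
          have ha : aVal A u u = 0 := by simp [aVal, hA0]
          rw [ha, zero_sub, abs_mul, abs_neg, abs_of_nonneg (hP u u).1]
          refine mul_le_mul (hdiag u) ?_ (abs_nonneg _) hD.le
          rw [abs_le]
          constructor <;> nlinarith [sq_nonneg ((z' u : ℝ) + w' u), sq_nonneg ((z' u : ℝ) - w' u)]
      _ = D * ((∑ u, (z' u : ℝ) ^ 2 + ∑ u, (w' u : ℝ) ^ 2) / 2) := by
          rw [← Finset.mul_sum, ← Finset.sum_add_distrib, Finset.sum_div]
      _ ≤ D * ((16 * n + 16 * n) / 2) := by gcongr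
      _ = _ := by ring
  rw [heq, sum_sum_eq_upper_add_lower_add_diag, h21]
  refine (abs_add_three _ _ _).trans ?_
  linarith

lemma le_pmax {n : ℕ} {P : Matrix (Fin n) (Fin n) ℝ} (hP : ∀ u v, 0 ≤ P u v ∧ P u v ≤ 1)
    (u v : Fin n) : P u v ≤ pmax P :=
  le_csSup ⟨1, by rintro _ ⟨u, v, rfl⟩; exact (hP u v).2⟩ ⟨u, v, rfl⟩

lemma pmax_nonneg {n : ℕ} {P : Matrix (Fin n) (Fin n) ℝ} (hP : ∀ u v, 0 ≤ P u v ∧ P u v ≤ 1) :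
    0 ≤ pmax P :=
  Real.sSup_nonneg (by rintro _ ⟨u, v, rfl⟩; exact (hP u v).1)

lemma opNorm_le_zero_of_dim_zero (M : Matrix (Fin 0) (Fin 0) ℝ) : opNorm M ≤ 0 := by
  refine Real.sSup_le ?_ le_rfl
  rintro _ ⟨x, hx, -⟩
  simp [sqnorm] at hx

/-- The low-degree block of `A - P` has operator norm of order `D` with polynomially small failure
probability, whenever `D ^ 2` dominates both the degree threshold and `n * P u v`. -/
lemma one_sub_rpow_le_prob_opNorm_restrict_le {n : ℕ} {P : Matrix (Fin n) (Fin n) ℝ}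
    (hP : ∀ u v, 0 ≤ P u v ∧ P u v ≤ 1) (hsymm : ∀ u v, P u v = P v u) (hn : 0 < n)
    {D τ C' : ℝ} (hD : 0 < D) (hPD : ∀ u v, P u v ≤ D ^ 2 / n) (hdiag : ∀ u, P u u ≤ D)
    (hτ : τ ≤ D ^ 2) (hC' : 0 < C') :
    1 - (n : ℝ) ^ (-C') ≤ prob P {A | opNorm (restrictM (adjMat A - P)
      (Finset.univ.filter fun u => degree A u ≤ τ)) ≤ (9000 + 804 * C') * D} := by
  have hn1 : (1 : ℝ) ≤ n := by exact_mod_cast hn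
  have hn' : (0 : ℝ) < n := by linarith
  rw [← one_sub_prob_compl]
  refine sub_le_sub_left ?_ 1
  have hl := prob_exists_light_gt_le hP hn hD hPD (38 + C')
  have hd := prob_exists_discrepancy_le hP hn hD hPD (c := C' + 10) (by linarith)
  have hlog0 := Real.log_nonneg hn1
  have hlog : 1 + Real.log n ≤ n := by linarith [Real.log_le_sub_one_of_pos hn']
  have hsmall (t : ℝ) (ht : t ≤ -((C' + 1) * (1 + Real.log n))) :
      Real.exp t ≤ (n : ℝ) ^ (-C') / 2 := by
    have h2 : Real.exp (-1) ≤ 1 / 2 := by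
      rw [Real.exp_neg, one_div]
      exact inv_anti₀ (by norm_num) (by linarith [Real.exp_one_gt_d9])
    calc Real.exp t ≤ Real.exp (Real.log n * (-C') + -1) := Real.exp_le_exp.2 (by nlinarith)
      _ = (n : ℝ) ^ (-C') * Real.exp (-1) := by rw [Real.exp_add, ← Real.rpow_def_of_pos hn']
      _ ≤ (n : ℝ) ^ (-C') * (1 / 2) := by gcongr
      _ = _ := by ring
  have hCn := mul_le_mul_of_nonneg_left hlog (by linarith : (0 : ℝ) ≤ C' + 1)
  have hl' := hl.trans (hsmall _ (by linarith))
  have hd' := hd.trans (hsmall _ (by nlinarith [mul_nonneg hC'.le hlog0]))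
  refine le_trans ((prob_mono hP ?_).trans (prob_union_le hP _ _))
    ((add_le_add hl' hd').trans_eq (add_halves _))
  intro A hA0 hA hbad
  by_contra hgood
  simp only [Set.mem_union, Set.mem_ofPred_eq, not_or, not_exists, not_and, not_lt,
    Finset.mem_product, mem_latticeBall, Finset.mem_filter, Finset.mem_univ, true_and,
    Finset.mem_range, Prod.forall] at hgood
  obtain ⟨hgl, hgd⟩ := hgood
  refine hbad ?_
  refine (opNorm_restrict_le hP hsymm hn hD hPD hdiag (c := C' + 10) (κ := 38 + C') (by linarith)
    (by linarith) hA0 hA (J := Finset.univ.filter fun u => degree A u ≤ τ) ?_ ?_ ?_).trans ?_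
  · intro u hu
    exact (Finset.mem_filter.1 hu).2.trans hτ
  · intro z w hz hw
    exact hgl z w ⟨hz, hw⟩
  · intro S T hS hT l hl hDl
    refine (hgd S T l ⟨⟨hS, hT⟩, hl, hDl⟩).trans_eq ?_
    ring
  · exact mul_le_mul_of_nonneg_right (by linarith) hD.le

/-- Lemma 9 (operator norm bound on the low-degree block of `A − P`). -/
theorem statement_18 (C' : ℝ) (hC' : 0 < C') :
    ∃ C : ℝ, 0 < C ∧
      ∀ (n : ℕ) (P : Matrix (Fin n) (Fin n) ℝ) (τ : ℝ), 0 < τ →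
        (∀ u v, P u v = P v u) → (∀ u v, 0 ≤ P u v ∧ P u v ≤ 1) →
        1 - (n : ℝ) ^ (-C') ≤ prob P
          { A | opNorm (restrictM (adjMat A - P)
                (Finset.univ.filter fun u => degree A u ≤ τ)) ≤
              C * (Real.sqrt ((n : ℝ) * pmax P) + Real.sqrt τ +
                (n : ℝ) * pmax P /
                  (Real.sqrt τ + Real.sqrt ((n : ℝ) * pmax P))) } := by
  refine ⟨9000 + 804 * C', by linarith, fun n P τ hτ hsymm hP => ?_⟩
  have hp0 := pmax_nonneg hP
  rcases n.eq_zero_or_pos with rfl | hn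
  · rw [Nat.cast_zero, Real.zero_rpow (by linarith), sub_zero, ← sum_weight (P := P)]
    refine Finset.sum_le_sum fun A _ => ?_
    rw [Set.indicator_of_mem]
    exact (opNorm_le_zero_of_dim_zero _).trans (by positivity)
  have hn1 : (1 : ℝ) ≤ n := by exact_mod_cast hn
  have hpn : pmax P ≤ n * pmax P := le_mul_of_one_le_left hp0 hn1
  have hd : 0 < max ((n : ℝ) * pmax P) τ := lt_max_of_lt_right hτ
  set D := √(max ((n : ℝ) * pmax P) τ) with hD
  have hD2 : D ^ 2 = max ((n : ℝ) * pmax P) τ := Real.sq_sqrt hd.le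
  have hDle : D ≤ √((n : ℝ) * pmax P) + √τ := by
    rcases max_cases ((n : ℝ) * pmax P) τ with h | h <;> rw [hD, h.1]
    · exact le_add_of_nonneg_right (Real.sqrt_nonneg _)
    · exact le_add_of_nonneg_left (Real.sqrt_nonneg _)
  refine (one_sub_rpow_le_prob_opNorm_restrict_le hP hsymm hn (Real.sqrt_pos.2 hd) ?_ ?_ ?_
    hC').trans (prob_mono hP fun A _ _ hA => Set.mem_ofPred_eq ▸ le_trans hA ?_)
  · intro u v
    rw [← hD, hD2, le_div_iff₀ (by linarith), mul_comm]
    exact (mul_le_mul_of_nonneg_left (le_pmax hP u v) (by linarith)).trans (le_max_left _ _)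
  · intro u
    refine Real.le_sqrt_of_sq_le (le_trans ?_ (le_max_left _ _))
    have h1 := le_pmax hP u u
    nlinarith [hP u u]
  · rw [← hD, hD2]
    exact le_max_right _ _
  · have : 0 ≤ (n : ℝ) * pmax P / (√τ + √((n : ℝ) * pmax P)) := by positivity
    gcongr
    linarith

end SBM
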